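/- arXiv:1706.09198 — 4 statements merged into one kernel-verified Lean document; each statement's English description precedes it below -/
import Mathlib

section
/- Let q ≥ 2 be an integer and let f, g ∈ L²(ℝ₊^q) be such that |f| ≤ M_f almost everywhere and f vanishes almost everywhere outside a q-dimensional square S_f ⊂ ℝ₊^q. Then for every integer 1 ≤ r ≤ q, the star contraction f ⋆_r^{r−1} g belongs to L²(ℝ₊^{2q−2r+1}) and ‖f ⋆_r^{r−1} g‖²_{L²(ℝ₊^{2q−2r+1})} ≤ M_f² μ(S_f)^{(q−1)/q} ‖g‖²_{L²(ℝ₊^q)}. -/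
open MeasureTheory Filter Topology

noncomputable section

/-- The positive orthant `ℝ₊ⁿ` inside `ℝⁿ`. -/
def posOrthant (n : ℕ) : Set (Fin n → ℝ) := {x | ∀ i, 0 ≤ x i}

/-- Lebesgue measure restricted to the positive orthant; the measure underlying `L²(ℝ₊ⁿ)`. -/
def μpos (n : ℕ) : MeasureTheory.Measure (Fin n → ℝ) :=
  MeasureTheory.volume.restrict (posOrthant n)

/-- Total extension of a finite tuple, giving the junk value `0` out of range. -/
def pad {k : ℕ} (t : Fin k → ℝ) (i : ℕ) : ℝ := if h : i < k then t ⟨i, h⟩ else 0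

/-- The `L²` inner product `⟨f, g⟩ = ∫ f ⬝ conj g` over the positive orthant. -/
def L2inner (n : ℕ) (f g : (Fin n → ℝ) → ℂ) : ℂ :=
  ∫ x, f x * (starRingEnd ℂ) (g x) ∂(μpos n)

/-- The `L²` norm over the positive orthant. -/
def L2norm (n : ℕ) (f : (Fin n → ℝ) → ℂ) : ℝ :=
  Real.sqrt (∫ x, ‖f x‖ ^ 2 ∂(μpos n))

/-- The adjoint `f*(t₁,…,tₙ) = conj (f (tₙ,…,t₁))`. -/
def adjF (n : ℕ) (f : (Fin n → ℝ) → ℂ) : (Fin n → ℝ) → ℂ :=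
  fun t => (starRingEnd ℂ) (f fun i => t i.rev)

/-- `f` is symmetric when `f = f*` a.e. on the positive orthant. -/
def IsSymmFn (n : ℕ) (f : (Fin n → ℝ) → ℂ) : Prop :=
  ∀ᵐ t ∂(μpos n), f t = adjF n f t

/-- Reindexing a multivariate function along an equality of dimensions. -/
def reindex {a b : ℕ} (h : a = b) (F : (Fin a → ℝ) → ℂ) : (Fin b → ℝ) → ℂ :=
  fun t => F fun j => t (Fin.cast h j)

/-- The integrand (in the `s`-variables) of the `p`-th arc contraction
`(f ⌢_p g)(t₁,…,t_{m+n-2p}) = ∫ f(t₁,…,t_{m-p},s_p,…,s₁) g(s₁,…,s_p,t_{m-p+1},…,t_{m+n-2p}) ds`. -/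
def arcKer (m n p : ℕ) (f : (Fin m → ℝ) → ℂ) (g : (Fin n → ℝ) → ℂ)
    (t : Fin (m + n - 2 * p) → ℝ) (s : Fin p → ℝ) : ℂ :=
  f (fun j => if (j : ℕ) < m - p then pad t j else pad s (m - 1 - (j : ℕ))) *
  g (fun j => if (j : ℕ) < p then pad s j else pad t (m + (j : ℕ) - 2 * p))

/-- The `p`-th arc contraction `f ⌢_p g`. -/
def arc (m n p : ℕ) (f : (Fin m → ℝ) → ℂ) (g : (Fin n → ℝ) → ℂ) :
    (Fin (m + n - 2 * p) → ℝ) → ℂ :=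
  fun t => ∫ s in posOrthant p, arcKer m n p f g t s

/-- The integrand of the star contraction of index `(p, p-1)`:
`(f ⋆_p^{p-1} g)(t₁,…,t_{m+n-2p+1})
  = ∫ f(t₁,…,t_{m-p},t_{m-p+1},s_{p-1},…,s₁) g(s₁,…,s_{p-1},t_{m-p+1},…,t_{m+n-2p+1}) ds`. -/
def starKer (m n p : ℕ) (f : (Fin m → ℝ) → ℂ) (g : (Fin n → ℝ) → ℂ)
    (t : Fin (m + n + 1 - 2 * p) → ℝ) (s : Fin (p - 1) → ℝ) : ℂ :=
  f (fun j => if (j : ℕ) < m - p + 1 then pad t j else pad s (m - 1 - (j : ℕ))) *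
  g (fun j => if (j : ℕ) < p - 1 then pad s j else pad t (m + (j : ℕ) + 1 - 2 * p))

/-- The star contraction `f ⋆_p^{p-1} g` of index `(p, p-1)`. -/
def starC (m n p : ℕ) (f : (Fin m → ℝ) → ℂ) (g : (Fin n → ℝ) → ℂ) :
    (Fin (m + n + 1 - 2 * p) → ℝ) → ℂ :=
  fun t => ∫ s in posOrthant (p - 1), starKer m n p f g t s

/-- The `q/2`-th arc contraction of two functions of `q` (even) variables,
expressed again as a function of `q` variables. -/
def contrHalf (q : ℕ) (f g : (Fin q → ℝ) → ℂ) : (Fin q → ℝ) → ℂ :=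
  fun t => ∫ s in posOrthant (q / 2),
    (f fun j => if (j : ℕ) < q - q / 2 then pad t j else pad s (q - 1 - (j : ℕ))) *
    (g fun j => if (j : ℕ) < q / 2 then pad s j else pad t (q + (j : ℕ) - 2 * (q / 2)))

/-- The full contraction `f ⌢_q g = ∫ f(t₁,…,t_q) g(t_q,…,t₁) dt` of two
functions of `q` variables. -/
def fullContr (q : ℕ) (f g : (Fin q → ℝ) → ℂ) : ℂ :=
  ∫ t in posOrthant q, f t * g fun i => t i.rev

/-- A `q`-dimensional square (cube): a product of `q` intervals of equal length. -/
def IsCube (q : ℕ) (S : Set (Fin q → ℝ)) : Prop :=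
  ∃ (a : Fin q → ℝ) (c : ℝ), S = Set.univ.pi fun i => Set.Icc (a i) (a i + c)

/-- One step of the left-bracketed iterated contraction, keeping track of the dimension. -/
def iterStep (q : ℕ) (acc : (d : ℕ) × ((Fin d → ℝ) → ℂ))
    (pr : ℕ × ((Fin q → ℝ) → ℂ)) : (d : ℕ) × ((Fin d → ℝ) → ℂ) :=
  ⟨acc.1 + q - 2 * pr.1, arc acc.1 q pr.1 acc.2 pr.2⟩

/-- The left-bracketed iterated contraction `(⋯((f₀ ⌢_{r₁} f₁) ⌢_{r₂} f₂)⋯) ⌢_{r_k} f_k`. -/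
def iterArc (q : ℕ) (f0 : (Fin q → ℝ) → ℂ) (l : List (ℕ × ((Fin q → ℝ) → ℂ))) :
    (d : ℕ) × ((Fin d → ℝ) → ℂ) :=
  l.foldl (iterStep q) ⟨q, f0⟩

/-- The value of a (`0`-dimensional, i.e. scalar) iterated contraction. -/
def scalarOf (x : (d : ℕ) × ((Fin d → ℝ) → ℂ)) : ℂ := x.2 fun _ => 0


/-- Products of quasi measure preserving maps. -/
theorem qmp_prodMap {A B C D : Type*} [MeasurableSpace A] [MeasurableSpace B] [MeasurableSpace C]
    [MeasurableSpace D] {mA : Measure A} {mB : Measure B} {mC : Measure C} {mD : Measure D}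
    [SFinite mA] [SFinite mC] [SFinite mD] [SFinite mB] {f : A → B} {g : C → D}
    (hf : Measure.QuasiMeasurePreserving f mA mB) (hg : Measure.QuasiMeasurePreserving g mC mD) :
    Measure.QuasiMeasurePreserving (Prod.map f g) (mA.prod mC) (mB.prod mD) := by
  refine ⟨hf.measurable.prodMap hg.measurable, ?_⟩
  rw [← Measure.map_prod_map _ _ hf.measurable hg.measurable]
  exact hf.absolutelyContinuous.prod hg.absolutelyContinuous

theorem qmp_abds_abs {A B S D : Type*} [MeasurableSpace A] [MeasurableSpace B] [MeasurableSpace S]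
    [MeasurableSpace D] (mA : Measure A) (mB : Measure B) (mS : Measure S) (mD : Measure D)
    [SigmaFinite mA] [SigmaFinite mB] [SigmaFinite mS] [SigmaFinite mD] :
    Measure.QuasiMeasurePreserving (fun p : (A × B × D) × S => (p.1.1, p.1.2.1, p.2))
      ((mA.prod (mB.prod mD)).prod mS) (mA.prod (mB.prod mS)) := by
  have h1 : Measure.QuasiMeasurePreserving (Prod.map id Prod.fst : A × (B × D) → A × B)
      (mA.prod (mB.prod mD)) (mA.prod mB) :=
    qmp_prodMap (Measure.QuasiMeasurePreserving.id _) Measure.quasiMeasurePreserving_fst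
  have h2 := qmp_prodMap h1 (Measure.QuasiMeasurePreserving.id mS)
  exact (measurePreserving_prodAssoc mA mB mS).quasiMeasurePreserving.comp h2

theorem qmp_abds_sbd {A B S D : Type*} [MeasurableSpace A] [MeasurableSpace B] [MeasurableSpace S]
    [MeasurableSpace D] (mA : Measure A) (mB : Measure B) (mS : Measure S) (mD : Measure D)
    [SigmaFinite mA] [SigmaFinite mB] [SigmaFinite mS] [SigmaFinite mD] :
    Measure.QuasiMeasurePreserving (fun p : (A × B × D) × S => (p.2, p.1.2.1, p.1.2.2))
      ((mA.prod (mB.prod mD)).prod mS) (mS.prod (mB.prod mD)) := by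
  have h1 : Measure.QuasiMeasurePreserving (Prod.snd : A × (B × D) → B × D)
      (mA.prod (mB.prod mD)) (mB.prod mD) := Measure.quasiMeasurePreserving_snd
  have h2 := qmp_prodMap h1 (Measure.QuasiMeasurePreserving.id mS)
  exact Measure.measurePreserving_swap.quasiMeasurePreserving.comp h2

theorem cs_indicator {S : Type*} [MeasurableSpace S] (mS : Measure S) {T : Set S}
    (hT : MeasurableSet T) {u : S → ENNReal} (hu : AEMeasurable u mS) :
    (∫⁻ s, T.indicator (fun _ => 1) s * u s ∂mS) ^ 2 ≤ mS T * ∫⁻ s, u s ^ 2 ∂mS := by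
  have h := ENNReal.lintegral_mul_le_Lp_mul_Lq mS Real.HolderConjugate.two_two
    (f := T.indicator (fun _ => 1)) (g := u) (measurable_const.indicator hT).aemeasurable hu
  have h3 : ∀ s, (T.indicator (fun _ => (1 : ENNReal)) s) ^ (2 : ℝ)
      = T.indicator (fun _ => 1) s := by
    intro s
    by_cases hs : s ∈ T <;> simp [hs]
  simp only [Pi.mul_apply, h3] at h
  rw [lintegral_indicator_const hT, one_mul] at h
  calc _ ≤ _ := pow_le_pow_left' h 2
    _ = _ := by
      rw [mul_pow, ← ENNReal.rpow_natCast, ← ENNReal.rpow_mul, ← ENNReal.rpow_natCast,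
        ← ENNReal.rpow_mul]
      norm_num

theorem star_core {A B S D : Type*} [MeasurableSpace A] [MeasurableSpace B] [MeasurableSpace S]
    [MeasurableSpace D] (mA : Measure A) (mB : Measure B) (mS : Measure S) (mD : Measure D)
    [SigmaFinite mA] [SigmaFinite mB] [SigmaFinite mS] [SigmaFinite mD]
    (F : A × B × S → ℂ) (G : S × B × D → ℂ)
    (hF : AEStronglyMeasurable F (mA.prod (mB.prod mS)))
    (hG : AEStronglyMeasurable G (mS.prod (mB.prod mD)))
    (M : ENNReal) (U : Set A) (T : Set S) (hU : MeasurableSet U) (hT : MeasurableSet T)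
    (hM : ∀ᵐ p ∂(mA.prod (mB.prod mS)),
      ‖F p‖ₑ ≤ M * (U.indicator (fun _ => 1) p.1 * T.indicator (fun _ => 1) p.2.2)) :
    AEStronglyMeasurable (fun x : A × B × D => ∫ s, F (x.1, x.2.1, s) * G (s, x.2.1, x.2.2) ∂mS)
      (mA.prod (mB.prod mD)) ∧
    ∫⁻ x : A × B × D, ‖∫ s, F (x.1, x.2.1, s) * G (s, x.2.1, x.2.2) ∂mS‖ₑ ^ 2
        ∂(mA.prod (mB.prod mD)) ≤
      M ^ 2 * (mA U * mS T) * ∫⁻ y, ‖G y‖ₑ ^ 2 ∂(mS.prod (mB.prod mD)) := by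
  have q1 := qmp_abds_abs mA mB mS mD
  have q2 := qmp_abds_sbd mA mB mS mD
  have hF' := hF.comp_quasiMeasurePreserving q1
  have hG' := hG.comp_quasiMeasurePreserving q2
  refine ⟨(hF'.mul hG').integral_prod_right', ?_⟩
  have hM' := Measure.ae_ae_of_ae_prod (q1.ae hM)
  have hGs := hG'.prodMk_left
  set φ : B × D → ENNReal := fun z => ∫⁻ s, ‖G (s, z)‖ₑ ^ 2 ∂mS with hφ
  have hG2 : AEMeasurable (fun y => ‖G y‖ₑ ^ 2) (mS.prod (mB.prod mD)) := hG.enorm.pow_const 2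
  have hφm : AEMeasurable φ (mB.prod mD) := hG2.prod_swap.lintegral_prod_right'
  have hbd : ∀ᵐ x ∂(mA.prod (mB.prod mD)),
      ‖∫ s, F (x.1, x.2.1, s) * G (s, x.2.1, x.2.2) ∂mS‖ₑ ^ 2 ≤
        (M ^ 2 * mS T) * (U.indicator (fun _ => 1) x.1 * φ x.2) := by
    filter_upwards [hM', hGs] with x hx hgx
    have hgx' : AEMeasurable (fun s => ‖G (s, x.2.1, x.2.2)‖ₑ) mS := hgx.enorm
    have e1 : ‖∫ s, F (x.1, x.2.1, s) * G (s, x.2.1, x.2.2) ∂mS‖ₑ ≤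
        (M * U.indicator (fun _ => 1) x.1) *
          ∫⁻ s, T.indicator (fun _ => 1) s * ‖G (s, x.2.1, x.2.2)‖ₑ ∂mS := by
      have hm : AEMeasurable (fun s => T.indicator (fun _ => (1 : ENNReal)) s *
          ‖G (s, x.2.1, x.2.2)‖ₑ) mS :=
        ((measurable_const.indicator hT).aemeasurable).mul hgx'
      rw [← lintegral_const_mul'' _ hm]
      refine (enorm_integral_le_lintegral_enorm _).trans (lintegral_mono_ae ?_)
      filter_upwards [hx] with s hs
      rw [enorm_mul]
      refine (mul_le_mul_left hs _).trans (le_of_eq ?_)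
      simp only [mul_assoc]
    have e2 : (U.indicator (fun _ => (1 : ENNReal)) x.1) ^ 2 = U.indicator (fun _ => 1) x.1 := by
      by_cases hs : x.1 ∈ U <;> simp [hs]
    calc _ ≤ _ := pow_le_pow_left' e1 2
      _ ≤ (M ^ 2 * U.indicator (fun _ => 1) x.1) * (mS T * φ x.2) := by
        rw [mul_pow, mul_pow, e2]
        exact mul_le_mul_right (cs_indicator mS hT hgx') _
      _ = _ := by ring
  refine (lintegral_mono_ae hbd).trans (le_of_eq ?_)
  have hUm : AEMeasurable (U.indicator (fun _ => (1 : ENNReal))) mA :=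
    (measurable_const.indicator hU).aemeasurable
  have hm : AEMeasurable (fun x : A × B × D => U.indicator (fun _ => (1 : ENNReal)) x.1 * φ x.2)
      (mA.prod (mB.prod mD)) :=
    (hUm.comp_quasiMeasurePreserving Measure.quasiMeasurePreserving_fst).mul
      (hφm.comp_quasiMeasurePreserving Measure.quasiMeasurePreserving_snd)
  rw [lintegral_const_mul'' _ hm, lintegral_prod_mul hUm hφm,
    lintegral_indicator_const hU, lintegral_prod_symm _ hG2]
  ring

/-- Lebesgue measure on the half line. -/
def nuPos : Measure ℝ := volume.restrict (Set.Ici 0)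

instance : SigmaFinite nuPos := by unfold nuPos; infer_instance

theorem posOrthant_eq (n : ℕ) : posOrthant n = Set.univ.pi fun _ => Set.Ici (0 : ℝ) := by
  ext x; simp only [posOrthant, Set.mem_ofPred_eq, Set.mem_univ_pi, Set.mem_Ici]

theorem mupos_eq (n : ℕ) : μpos n = Measure.pi fun _ : Fin n => nuPos := by
  unfold μpos nuPos
  rw [posOrthant_eq, volume_pi, Measure.restrict_pi_pi]

/-- Splitting the coordinates into three blocks. -/
def splitEquiv {α β γ n : Type*} (σ : α ⊕ β ⊕ γ ≃ n) :
    ((α → ℝ) × (β → ℝ) × (γ → ℝ)) ≃ᵐ (n → ℝ) :=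
  ((MeasurableEquiv.refl (α → ℝ)).prodCongr
    (MeasurableEquiv.sumPiEquivProdPi (fun _ : β ⊕ γ => ℝ)).symm).trans
  ((MeasurableEquiv.sumPiEquivProdPi (fun _ : α ⊕ β ⊕ γ => ℝ)).symm.trans
    (MeasurableEquiv.piCongrLeft (fun _ => ℝ) σ))

theorem splitEquiv_apply {α β γ n : Type*} (σ : α ⊕ β ⊕ γ ≃ n)
    (y : (α → ℝ) × (β → ℝ) × (γ → ℝ)) (i : α ⊕ β ⊕ γ) :
    splitEquiv σ y (σ i) = Sum.elim y.1 (Sum.elim y.2.1 y.2.2) i := by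
  have : splitEquiv σ y (σ i) = (MeasurableEquiv.piCongrLeft (fun _ => ℝ) σ)
    ((MeasurableEquiv.sumPiEquivProdPi (fun _ : α ⊕ β ⊕ γ => ℝ)).symm
      (y.1, (MeasurableEquiv.sumPiEquivProdPi (fun _ : β ⊕ γ => ℝ)).symm y.2)) (σ i) := rfl
  rw [this, MeasurableEquiv.piCongrLeft_apply_apply]
  rcases i with i | i | i <;> rfl

theorem splitEquiv_eq {α β γ n : Type*} (σ : α ⊕ β ⊕ γ ≃ n)
    (y : (α → ℝ) × (β → ℝ) × (γ → ℝ)) (x : n → ℝ) (h1 : ∀ i, x (σ (Sum.inl i)) = y.1 i)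
    (h2 : ∀ i, x (σ (Sum.inr (Sum.inl i))) = y.2.1 i)
    (h3 : ∀ i, x (σ (Sum.inr (Sum.inr i))) = y.2.2 i) : x = splitEquiv σ y := by
  ext j
  obtain ⟨i, rfl⟩ := σ.surjective j
  rw [splitEquiv_apply]
  rcases i with i | i | i
  · exact h1 i
  · exact h2 i
  · exact h3 i

theorem splitEquiv_mp {α β γ n : Type*} [Fintype α] [Fintype β] [Fintype γ] [Fintype n]
    (σ : α ⊕ β ⊕ γ ≃ n) :
    MeasurePreserving (splitEquiv σ)
      ((Measure.pi fun _ : α => nuPos).prod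
        ((Measure.pi fun _ : β => nuPos).prod (Measure.pi fun _ : γ => nuPos)))
      (Measure.pi fun _ : n => nuPos) := by
  have h1 := measurePreserving_sumPiEquivProdPi_symm (X := fun _ : β ⊕ γ => ℝ) (fun _ => nuPos)
  have h2 := measurePreserving_sumPiEquivProdPi_symm (X := fun _ : α ⊕ β ⊕ γ => ℝ) (fun _ => nuPos)
  have h3 := measurePreserving_piCongrLeft (α := fun _ => ℝ) (fun _ : n => nuPos) σ
  exact h3.comp (h2.comp ((MeasurePreserving.id _).prod h1))

/-- Index bijection for the arguments of `f`. -/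
def idxF (k p q : ℕ) (h : q = k + p + 1) : Fin k ⊕ Unit ⊕ Fin p ≃ Fin q :=
  Equiv.ofBijective (Sum.elim (fun i => ⟨i, by omega⟩)
      (Sum.elim (fun _ => ⟨k, by omega⟩) (fun i => ⟨q - 1 - i, by omega⟩))) <| by
    rw [Fintype.bijective_iff_injective_and_card]
    constructor
    · rintro (⟨i, hi⟩ | i | ⟨i, hi⟩) (⟨j, hj⟩ | j | ⟨j, hj⟩) <;> simp <;> omega
    · simp; omega

/-- Index bijection for the arguments of `g` and of the contraction. -/
def idxG (k p q : ℕ) (h : q = k + p + 1) : Fin k ⊕ Unit ⊕ Fin p ≃ Fin q :=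
  Equiv.ofBijective (Sum.elim (fun i => ⟨i, by omega⟩)
      (Sum.elim (fun _ => ⟨k, by omega⟩) (fun i => ⟨k + 1 + i, by omega⟩))) <| by
    rw [Fintype.bijective_iff_injective_and_card]
    constructor
    · rintro (⟨i, hi⟩ | i | ⟨i, hi⟩) (⟨j, hj⟩ | j | ⟨j, hj⟩) <;> simp <;> omega
    · simp; omega

theorem pad_of_eq {k : ℕ} (t : Fin k → ℝ) (i : ℕ) (j : Fin k) (h : i = j) : pad t i = t j := by
  subst h; simp [pad]

theorem starKer_split (q r : ℕ) (hr1 : 1 ≤ r) (hrq : r ≤ q) (f g : (Fin q → ℝ) → ℂ)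
    (hf : q = (q - r) + (r - 1) + 1) (hg : q = (r - 1) + (q - r) + 1)
    (hh : q + q + 1 - 2 * r = (q - r) + (q - r) + 1)
    (a : Fin (q - r) → ℝ) (b : Unit → ℝ) (d : Fin (q - r) → ℝ) (s : Fin (r - 1) → ℝ) :
    starKer q q r f g (splitEquiv (idxG _ _ _ hh) (a, b, d)) s =
      f (splitEquiv (idxF _ _ _ hf) (a, b, s)) * g (splitEquiv (idxG _ _ _ hg) (s, b, d)) := by
  unfold starKer
  set T := splitEquiv (idxG _ _ _ hh) (a, b, d) with hT
  have p1 : ∀ (i : ℕ) (j : Fin (q - r)), i = j → pad T i = a j := by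
    intro i j hij
    rw [pad_of_eq T i (idxG _ _ _ hh (Sum.inl j)) (by rw [hij]; rfl), hT, splitEquiv_apply]
    rfl
  have p2 : ∀ (i : ℕ) (j : Unit), i = q - r → pad T i = b j := by
    intro i j hij
    rw [pad_of_eq T i (idxG _ _ _ hh (Sum.inr (Sum.inl j))) (by rw [hij]; rfl), hT,
      splitEquiv_apply]
    rfl
  have p3 : ∀ (i : ℕ) (j : Fin (q - r)), i = q - r + 1 + j → pad T i = d j := by
    intro i j hij
    rw [pad_of_eq T i (idxG _ _ _ hh (Sum.inr (Sum.inr j))) (by rw [hij]; rfl), hT,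
      splitEquiv_apply]
    rfl
  have f1 : ∀ i, ((idxF _ _ _ hf (Sum.inl i) : Fin q) : ℕ) = i := fun _ => rfl
  have f2 : ∀ i, ((idxF _ _ _ hf (Sum.inr (Sum.inl i)) : Fin q) : ℕ) = q - r := fun _ => rfl
  have f3 : ∀ i, ((idxF _ _ _ hf (Sum.inr (Sum.inr i)) : Fin q) : ℕ) = q - 1 - i := fun _ => rfl
  have g1 : ∀ i, ((idxG _ _ _ hg (Sum.inl i) : Fin q) : ℕ) = i := fun _ => rfl
  have g2 : ∀ i, ((idxG _ _ _ hg (Sum.inr (Sum.inl i)) : Fin q) : ℕ) = r - 1 := fun _ => rfl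
  have g3 : ∀ i, ((idxG _ _ _ hg (Sum.inr (Sum.inr i)) : Fin q) : ℕ) = r - 1 + 1 + i :=
    fun _ => rfl
  congr 2
  · apply splitEquiv_eq
    · intro i
      rw [if_pos (by rw [f1]; omega)]
      exact p1 _ _ (f1 i)
    · intro i
      rw [if_pos (by rw [f2]; omega)]
      exact p2 _ _ (f2 i)
    · intro i
      rw [if_neg (by rw [f3]; omega)]
      exact pad_of_eq _ _ _ (by rw [f3]; omega)
  · apply splitEquiv_eq
    · intro i
      rw [if_pos (by rw [g1]; omega)]
      exact pad_of_eq _ _ _ (g1 i)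
    · intro i
      rw [if_neg (by rw [g2]; omega)]
      exact p2 _ _ (by rw [g2]; omega)
    · intro i
      rw [if_neg (by rw [g3]; omega)]
      exact p3 _ _ (by rw [g3]; omega)

theorem nuPos_box_le {n : ℕ} (a : Fin n → ℝ) (c : ℝ) :
    (Measure.pi fun _ : Fin n => nuPos) (Set.univ.pi fun i => Set.Icc (a i) (a i + c)) ≤
      ENNReal.ofReal c ^ n := by
  rw [Measure.pi_pi]
  calc _ ≤ ∏ _i : Fin n, ENNReal.ofReal c := by
        refine Finset.prod_le_prod' fun i _ => ?_
        refine (Measure.restrict_apply_le _ _).trans ?_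
        rw [Real.volume_Icc]
        simp
    _ = _ := by simp

theorem L2norm_sq (n : ℕ) (f : (Fin n → ℝ) → ℂ) (hf : AEStronglyMeasurable f (μpos n)) :
    L2norm n f ^ 2 = (∫⁻ x, ‖f x‖ₑ ^ 2 ∂(μpos n)).toReal := by
  have hm : AEStronglyMeasurable (fun x => ‖f x‖ ^ 2) (μpos n) := hf.norm.pow 2
  unfold L2norm
  rw [Real.sq_sqrt (integral_nonneg fun _ => by positivity),
    integral_eq_lintegral_of_nonneg_ae (Eventually.of_forall fun _ => by positivity) hm]
  congr 2
  ext x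
  rw [ENNReal.ofReal_pow (norm_nonneg _), ofReal_norm]

theorem memLp_two_iff (n : ℕ) (f : (Fin n → ℝ) → ℂ) (hf : AEStronglyMeasurable f (μpos n)) :
    MemLp f 2 (μpos n) ↔ ∫⁻ x, ‖f x‖ₑ ^ 2 ∂(μpos n) < ⊤ := by
  have := eLpNorm_lt_top_iff_lintegral_rpow_enorm_lt_top (p := 2) (f := f) (μ := μpos n)
    (by norm_num) (by norm_num)
  simp only [MemLp, hf, true_and, this]
  norm_num

/-- `‖f ⋆_r^{r-1} g‖² ≤ M_f² μ(S_f)^{(q-1)/q} ‖g‖²` for bounded,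
boundedly supported `f`. -/
theorem star_contraction_norm_sq_bound (q : ℕ) (hq2 : 2 ≤ q)
    (f g : (Fin q → ℝ) → ℂ)
    (hf : MeasureTheory.MemLp f 2 (μpos q)) (hg : MeasureTheory.MemLp g 2 (μpos q))
    (Mf : ℝ) (hbf : ∀ᵐ t ∂(μpos q), ‖f t‖ ≤ Mf)
    (Sf : Set (Fin q → ℝ)) (hSf : IsCube q Sf) (hSf' : Sf ⊆ posOrthant q)
    (hsf : ∀ᵐ t ∂(μpos q), t ∉ Sf → f t = 0)
    (r : ℕ) (hr1 : 1 ≤ r) (hrq : r ≤ q) :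
    MeasureTheory.MemLp (starC q q r f g) 2 (μpos (q + q + 1 - 2 * r)) ∧
    (L2norm (q + q + 1 - 2 * r) (starC q q r f g)) ^ 2 ≤
      Mf ^ 2 * (MeasureTheory.volume Sf).toReal ^ (((q : ℝ) - 1) / (q : ℝ))
        * (L2norm q g) ^ 2 := by
  obtain ⟨a, c, hS⟩ := hSf
  have hSf_vol : (volume Sf).toReal ^ (((q : ℝ) - 1) / (q : ℝ)) =
      (ENNReal.ofReal c ^ (q - 1)).toReal := by
    have hv : volume Sf = ENNReal.ofReal c ^ q := by
      rw [hS, volume_pi, Measure.pi_pi]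
      simp [Real.volume_Icc]
    rw [hv, ENNReal.toReal_pow, ENNReal.toReal_pow, ← Real.rpow_natCast, ← Real.rpow_mul
      ENNReal.toReal_nonneg, ← Real.rpow_natCast]
    congr 1
    have : (q : ℝ) ≠ 0 := by positivity
    rw [Nat.cast_sub (by omega)]
    field_simp
    simp
  rw [hSf_vol]
  have ef : q = (q - r) + (r - 1) + 1 := by omega
  have eg : q = (r - 1) + (q - r) + 1 := by omega
  have eh : q + q + 1 - 2 * r = (q - r) + (q - r) + 1 := by omega
  have mf := splitEquiv_mp (idxF _ _ _ ef)
  have mg := splitEquiv_mp (idxG _ _ _ eg)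
  have mh := splitEquiv_mp (idxG _ _ _ eh)
  rw [← mupos_eq q] at mf mg
  rw [← mupos_eq (q + q + 1 - 2 * r)] at mh
  set U : Set (Fin (q - r) → ℝ) := Set.univ.pi fun i =>
    Set.Icc (a (idxF _ _ _ ef (Sum.inl i))) (a (idxF _ _ _ ef (Sum.inl i)) + c) with hU
  set T : Set (Fin (r - 1) → ℝ) := Set.univ.pi fun i =>
    Set.Icc (a (idxF _ _ _ ef (Sum.inr (Sum.inr i))))
      (a (idxF _ _ _ ef (Sum.inr (Sum.inr i))) + c) with hT
  have core := star_core (Measure.pi fun _ : Fin (q - r) => nuPos)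
    (Measure.pi fun _ : Unit => nuPos) (Measure.pi fun _ : Fin (r - 1) => nuPos)
    (Measure.pi fun _ : Fin (q - r) => nuPos)
    (f ∘ splitEquiv (idxF _ _ _ ef)) (g ∘ splitEquiv (idxG _ _ _ eg))
    (hf.aestronglyMeasurable.comp_measurePreserving mf)
    (hg.aestronglyMeasurable.comp_measurePreserving mg)
    (ENNReal.ofReal Mf) U T (MeasurableSet.univ_pi fun _ => measurableSet_Icc)
    (MeasurableSet.univ_pi fun _ => measurableSet_Icc) (by
      filter_upwards [mf.quasiMeasurePreserving.ae hbf, mf.quasiMeasurePreserving.ae hsf]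
        with p h1 h2
      have hle : ‖f (splitEquiv (idxF _ _ _ ef) p)‖ₑ ≤ ENNReal.ofReal Mf := by
        rw [← ofReal_norm]
        exact ENNReal.ofReal_le_ofReal h1
      by_cases hp : splitEquiv (idxF _ _ _ ef) p ∈ Sf
      · rw [hS, Set.mem_univ_pi] at hp
        have hpU : p.1 ∈ U := by
          rw [hU, Set.mem_univ_pi]
          intro i
          have := hp (idxF _ _ _ ef (Sum.inl i))
          rwa [splitEquiv_apply] at this
        have hpT : p.2.2 ∈ T := by
          rw [hT, Set.mem_univ_pi]
          intro i
          have := hp (idxF _ _ _ ef (Sum.inr (Sum.inr i)))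
          rwa [splitEquiv_apply] at this
        simpa [hpU, hpT] using hle
      · simp [h2 hp])
  have hcomp : (fun x : (Fin (q - r) → ℝ) × (Unit → ℝ) × (Fin (q - r) → ℝ) =>
      ∫ s, (f ∘ splitEquiv (idxF _ _ _ ef)) (x.1, x.2.1, s) *
        (g ∘ splitEquiv (idxG _ _ _ eg)) (s, x.2.1, x.2.2)
        ∂(Measure.pi fun _ : Fin (r - 1) => nuPos)) =
      starC q q r f g ∘ splitEquiv (idxG _ _ _ eh) := by
    ext x
    rw [← mupos_eq]
    obtain ⟨x1, x2, x3⟩ := x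
    simp only [Function.comp_apply, starC, starKer_split q r hr1 hrq f g ef eg eh]
    rfl
  obtain ⟨c1, c2⟩ := core
  have c2' := (le_of_eq (lintegral_congr fun x =>
    congrArg (fun z : ℂ => ‖z‖ₑ ^ 2) (congrFun hcomp x).symm)).trans c2
  rw [hcomp] at c1
  have hmeas : AEStronglyMeasurable (starC q q r f g) (μpos (q + q + 1 - 2 * r)) :=
    (mh.aestronglyMeasurable_comp_iff (MeasurableEquiv.measurableEmbedding _)).1 c1
  have l1 := mh.lintegral_comp_emb (MeasurableEquiv.measurableEmbedding _)
    (fun x => ‖starC q q r f g x‖ₑ ^ 2)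
  have l2 := mg.lintegral_comp_emb (MeasurableEquiv.measurableEmbedding _) (fun x => ‖g x‖ₑ ^ 2)
  simp only [Function.comp_apply] at c2'
  rw [l1, l2] at c2'
  have hbox : (Measure.pi fun _ : Fin (q - r) => nuPos) U *
      (Measure.pi fun _ : Fin (r - 1) => nuPos) T ≤ ENNReal.ofReal c ^ (q - 1) := by
    refine (mul_le_mul' (nuPos_box_le _ _) (nuPos_box_le _ _)).trans (le_of_eq ?_)
    rw [← pow_add]
    congr 1
    omega
  have c3 := c2'.trans (mul_le_mul_left (mul_le_mul_right hbox _) _)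
  have hgfin := (memLp_two_iff q g hg.aestronglyMeasurable).1 hg
  have hfin : ENNReal.ofReal Mf ^ 2 * ENNReal.ofReal c ^ (q - 1) *
      ∫⁻ x, ‖g x‖ₑ ^ 2 ∂(μpos q) < ⊤ :=
    ENNReal.mul_lt_top (ENNReal.mul_lt_top (ENNReal.pow_lt_top ENNReal.ofReal_lt_top)
      (ENNReal.pow_lt_top ENNReal.ofReal_lt_top)) hgfin
  refine ⟨(memLp_two_iff _ _ hmeas).2 (c3.trans_lt hfin), ?_⟩
  rw [L2norm_sq _ _ hmeas, L2norm_sq _ _ hg.aestronglyMeasurable]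
  refine (ENNReal.toReal_mono hfin.ne c3).trans ?_
  rw [ENNReal.toReal_mul, ENNReal.toReal_mul]
  refine mul_le_mul_of_nonneg_right (mul_le_mul_of_nonneg_right ?_ ENNReal.toReal_nonneg)
    ENNReal.toReal_nonneg
  rw [ENNReal.toReal_pow, ENNReal.toReal_ofReal']
  rcases le_total Mf 0 with h | h
  · rw [max_eq_right h]; nlinarith [sq_nonneg Mf]
  · rw [max_eq_left h]

end
end

section
/- Let q ≥ 2 be an even integer, λ > 0, and let {f_n^{(i)} : n, i ∈ ℕ} be a bi-indexed family of symmetric functions in L²(ℝ₊^q) such that for all i, j ∈ ℕ: ⟨f_n^{(i)}, f_n^{(j)}⟩ → λ and ‖f_n^{(i)} ⌢_{q/2} f_n^{(j)} − f_n^{(j)}‖ → 0 as n → ∞. Then for every k ≥ 1 and all indices i₁, …, i_{k+1} ∈ ℕ, ⟨f_n^{(i₁)} ⌢_{q/2} f_n^{(i₂)} ⌢_{q/2} ⋯ ⌢_{q/2} f_n^{(i_k)}, f_n^{(i_{k+1})}⟩ → λ as n → ∞ (iterated contraction bracketed from the left). -/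
open MeasureTheory Filter Topology

noncomputable section

lemma aux_eLpNorm_sq {X : Type*} [MeasurableSpace X] (μ : Measure X) (f : X → ℂ) :
    eLpNorm f 2 μ ^ 2 = ∫⁻ x, ‖f x‖ₑ ^ 2 ∂μ := by
  have h := eLpNorm_nnreal_pow_eq_lintegral (μ := μ) (f := f) (p := 2) (by norm_num)
  simpa using h

lemma aux_cs {X : Type*} [MeasurableSpace X] (μ : Measure X) {f g : X → ℂ}
    (hf : AEStronglyMeasurable f μ) (hg : AEStronglyMeasurable g μ) :
    ‖∫ x, f x * g x ∂μ‖ₑ ≤ eLpNorm f 2 μ * eLpNorm g 2 μ := by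
  refine (enorm_integral_le_lintegral_enorm _).trans ?_
  rw [← eLpNorm_one_eq_lintegral_enorm]
  have h := eLpNorm_smul_le_mul_eLpNorm (p := 2) (q := 2) (r := 1) hg hf
  exact h

section abstractPart
variable {X : Type*} [MeasurableSpace X] (μ : Measure X) [SFinite μ]

lemma aux_qmp1 : Measure.QuasiMeasurePreserving
    (fun z : (X × X) × X => (z.1.1, z.2)) ((μ.prod μ).prod μ) (μ.prod μ) := by
  have h1 : MeasurePreserving (Prod.map Prod.swap id) ((μ.prod μ).prod μ) ((μ.prod μ).prod μ) :=
    Measure.measurePreserving_swap.prod (MeasurePreserving.id μ)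
  have h2 := measurePreserving_prodAssoc μ μ μ
  exact (Measure.quasiMeasurePreserving_snd.comp h2.quasiMeasurePreserving).comp
    h1.quasiMeasurePreserving

lemma aux_qmp2 : Measure.QuasiMeasurePreserving
    (fun z : (X × X) × X => (z.2, z.1.2)) ((μ.prod μ).prod μ) (μ.prod μ) := by
  have h2 := measurePreserving_prodAssoc μ μ μ
  exact (Measure.measurePreserving_swap (μ := μ) (ν := μ)).quasiMeasurePreserving.comp
    (Measure.quasiMeasurePreserving_snd.comp h2.quasiMeasurePreserving)

lemma aux_memLp_left {F : X × X → ℂ} (hF : MemLp F 2 (μ.prod μ)) :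
    ∀ᵐ x ∂μ, MemLp (fun s => F (x, s)) 2 μ := by
  have hm : AEMeasurable (fun z => ‖F z‖ₑ ^ 2) (μ.prod μ) := hF.1.enorm.pow_const 2
  have h : ∫⁻ x, ∫⁻ s, ‖F (x, s)‖ₑ ^ 2 ∂μ ∂μ ≠ ⊤ := by
    rw [← lintegral_prod _ hm, ← aux_eLpNorm_sq]
    exact ENNReal.pow_ne_top hF.2.ne
  filter_upwards [hF.1.prodMk_left, ae_lt_top' hm.lintegral_prod_right' h] with x h1 h2
  refine ⟨h1, ?_⟩
  rw [← aux_eLpNorm_sq] at h2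
  by_contra hc
  simp only [not_lt, top_le_iff] at hc
  simp [hc] at h2

lemma aux_memLp_right {G : X × X → ℂ} (hG : MemLp G 2 (μ.prod μ)) :
    ∀ᵐ y ∂μ, MemLp (fun s => G (s, y)) 2 μ :=
  aux_memLp_left μ (hG.comp_measurePreserving Measure.measurePreserving_swap)

lemma aux_ae_both {F G : X × X → ℂ} (hF : MemLp F 2 (μ.prod μ)) (hG : MemLp G 2 (μ.prod μ)) :
    ∀ᵐ z ∂(μ.prod μ), MemLp (fun s => F (z.1, s)) 2 μ ∧ MemLp (fun s => G (s, z.2)) 2 μ :=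
  (Measure.quasiMeasurePreserving_fst.ae (aux_memLp_left μ hF)).and
    (Measure.quasiMeasurePreserving_snd.ae (aux_memLp_right μ hG))

lemma aux_aesm {F G : X × X → ℂ} (hF : MemLp F 2 (μ.prod μ)) (hG : MemLp G 2 (μ.prod μ)) :
    AEStronglyMeasurable (fun z : X × X => ∫ s, F (z.1, s) * G (s, z.2) ∂μ) (μ.prod μ) := by
  have h := (hF.1.comp_quasiMeasurePreserving (aux_qmp1 μ)).mul
    (hG.1.comp_quasiMeasurePreserving (aux_qmp2 μ))
  exact h.integral_prod_right'

lemma aux_bound {F G : X × X → ℂ} (hF : MemLp F 2 (μ.prod μ)) (hG : MemLp G 2 (μ.prod μ)) :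
    eLpNorm (fun z : X × X => ∫ s, F (z.1, s) * G (s, z.2) ∂μ) 2 (μ.prod μ) ≤
      eLpNorm F 2 (μ.prod μ) * eLpNorm G 2 (μ.prod μ) := by
  have hm : AEMeasurable (fun z => ‖F z‖ₑ ^ 2) (μ.prod μ) := hF.1.enorm.pow_const 2
  have hm' : AEMeasurable (fun z => ‖G z‖ₑ ^ 2) (μ.prod μ) := hG.1.enorm.pow_const 2
  rw [← ENNReal.pow_le_pow_left_iff (n := 2) (by norm_num), mul_pow, aux_eLpNorm_sq, aux_eLpNorm_sq,
    aux_eLpNorm_sq, lintegral_prod _ hm, lintegral_prod_symm _ hm',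
    ← lintegral_prod_mul hm.lintegral_prod_right' hm'.lintegral_prod_left']
  refine lintegral_mono_ae ?_
  filter_upwards [aux_ae_both μ hF hG] with z hz
  rw [← aux_eLpNorm_sq, ← aux_eLpNorm_sq, ← mul_pow]
  gcongr
  exact aux_cs μ hz.1.1 hz.2.1

end abstractPart

/-- gluing two half-tuples along an index equivalence -/
def glue {p q : ℕ} (e : Fin p ⊕ Fin p ≃ Fin q) (z : (Fin p → ℝ) × (Fin p → ℝ)) : Fin q → ℝ :=
  fun j => Sum.elim z.1 z.2 (e.symm j)

lemma aux_glue_eq {p q : ℕ} (e : Fin p ⊕ Fin p ≃ Fin q) :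
    glue e = ((MeasurableEquiv.sumPiEquivProdPi (fun _ : Fin p ⊕ Fin p => ℝ)).symm.trans
      (MeasurableEquiv.piCongrLeft (fun _ : Fin q => ℝ) e)) := by
  funext z j
  obtain ⟨i, rfl⟩ := e.surjective j
  rw [MeasurableEquiv.trans_apply, MeasurableEquiv.coe_piCongrLeft]
  have := Equiv.piCongrLeft_apply_apply (fun _ : Fin q => ℝ) e
    ((MeasurableEquiv.sumPiEquivProdPi (fun _ : Fin p ⊕ Fin p => ℝ)).symm z) i
  refine Eq.trans ?_ this.symm
  rcases i with i | i <;> simp [glue] <;> rfl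

lemma aux_glue_emb {p q : ℕ} (e : Fin p ⊕ Fin p ≃ Fin q) : MeasurableEmbedding (glue e) := by
  rw [aux_glue_eq]; exact MeasurableEquiv.measurableEmbedding _

lemma aux_glue_mp {p q : ℕ} (e : Fin p ⊕ Fin p ≃ Fin q) :
    MeasurePreserving (glue e) ((μpos p).prod (μpos p)) (μpos q) := by
  have h : MeasurePreserving (glue e) volume volume := by
    rw [aux_glue_eq]
    exact (volume_measurePreserving_piCongrLeft (fun _ : Fin q => ℝ) e).comp
      (volume_measurePreserving_sumPiEquivProdPi_symm (fun _ : Fin p ⊕ Fin p => ℝ))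
  have h2 := h.restrict_preimage_emb (aux_glue_emb e) (posOrthant q)
  have h3 : glue e ⁻¹' posOrthant q = posOrthant p ×ˢ posOrthant p := by
    ext z
    simp only [posOrthant, Set.mem_preimage, Set.mem_ofPred_eq, glue, Set.mem_prod]
    rw [e.symm.forall_congr_left]
    simp
  unfold μpos
  rw [Measure.prod_restrict, ← h3]
  exact h2

instance (n : ℕ) : SFinite (μpos n) := by unfold μpos; infer_instance

/-- straight gluing -/
def eStr (p : ℕ) : Fin p ⊕ Fin p ≃ Fin (p + p) := finSumFinEquiv
/-- gluing with the second half reversed -/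
def eRev (p : ℕ) : Fin p ⊕ Fin p ≃ Fin (p + p) :=
  (Equiv.sumCongr (Equiv.refl _) Fin.revPerm).trans finSumFinEquiv

lemma aux_pad1 (p : ℕ) (z : (Fin p → ℝ) × (Fin p → ℝ)) (i : Fin p) :
    pad (glue (eStr p) z) (i : ℕ) = z.1 i := by
  have h : (i : ℕ) < p + p := by omega
  have h2 : (⟨i, h⟩ : Fin (p + p)) = eStr p (Sum.inl i) := by ext; simp [eStr]
  rw [pad, dif_pos h, h2]; simp [glue]

lemma aux_pad2 (p : ℕ) (z : (Fin p → ℝ) × (Fin p → ℝ)) (i : Fin p) :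
    pad (glue (eStr p) z) (p + (i : ℕ)) = z.2 i := by
  have h : p + (i : ℕ) < p + p := by omega
  have h2 : (⟨p + i, h⟩ : Fin (p + p)) = eStr p (Sum.inr i) := by ext; simp [eStr, add_comm]
  rw [pad, dif_pos h, h2]; simp [glue]

lemma aux_pad3 (p : ℕ) (s : Fin p → ℝ) (i : Fin p) : pad s (i : ℕ) = s i := by
  simp [pad]

lemma aux_contr (p : ℕ) (f g : (Fin (p + p) → ℝ) → ℂ) (z : (Fin p → ℝ) × (Fin p → ℝ)) :
    contrHalf (p + p) f g (glue (eStr p) z) =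
      ∫ s, f (glue (eRev p) (z.1, s)) * g (glue (eStr p) (s, z.2)) ∂(μpos p) := by
  have hp : (p + p) / 2 = p := by omega
  unfold contrHalf
  rw [hp]
  unfold μpos
  congr 1
  funext s
  congr 2
  · funext j
    obtain ⟨i, rfl⟩ := (eRev p).surjective j
    rcases i with i | i
    · have h1 : ((eRev p (Sum.inl i) : Fin (p + p)) : ℕ) = i := by simp [eRev]
      rw [h1, if_pos (by omega), aux_pad1]; simp [glue]
    · have h1 : ((eRev p (Sum.inr i) : Fin (p + p)) : ℕ) = p + (p - (i + 1)) := by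
        simp [eRev, Fin.val_rev, add_comm]
      have h2 : p + p - 1 - (p + (p - ((i : ℕ) + 1))) = i := by omega
      rw [h1, if_neg (by omega), h2, aux_pad3]; simp [glue]
  · funext j
    obtain ⟨i, rfl⟩ := (eStr p).surjective j
    rcases i with i | i
    · have h1 : ((eStr p (Sum.inl i) : Fin (p + p)) : ℕ) = i := by simp [eStr]
      rw [h1, if_pos (by omega), aux_pad3]; simp [glue]
    · have h1 : ((eStr p (Sum.inr i) : Fin (p + p)) : ℕ) = p + i := by simp [eStr, add_comm]
      have h2 : p + p + (p + (i : ℕ)) - 2 * p = p + i := by omega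
      rw [h1, if_neg (by omega), h2, aux_pad2]; simp [glue]

lemma aux_memLp_of_glue {p : ℕ} {f : (Fin (p + p) → ℝ) → ℂ}
    (h : AEStronglyMeasurable (f ∘ glue (eStr p)) ((μpos p).prod (μpos p))) :
    AEStronglyMeasurable f (μpos (p + p)) :=
  ((aux_glue_mp (eStr p)).aestronglyMeasurable_comp_iff (aux_glue_emb _)).1 h

lemma aux_contr_bound (p : ℕ) {f g : (Fin (p + p) → ℝ) → ℂ}
    (hf : MemLp f 2 (μpos (p + p))) (hg : MemLp g 2 (μpos (p + p))) :
    MemLp (contrHalf (p + p) f g) 2 (μpos (p + p)) ∧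
    eLpNorm (contrHalf (p + p) f g) 2 (μpos (p + p)) ≤
      eLpNorm f 2 (μpos (p + p)) * eLpNorm g 2 (μpos (p + p)) := by
  have hF := hf.comp_measurePreserving (aux_glue_mp (eRev p))
  have hG := hg.comp_measurePreserving (aux_glue_mp (eStr p))
  have e : (contrHalf (p + p) f g) ∘ glue (eStr p) = fun z : (Fin p → ℝ) × (Fin p → ℝ) =>
      ∫ s, (f ∘ glue (eRev p)) (z.1, s) * (g ∘ glue (eStr p)) (s, z.2) ∂(μpos p) :=
    funext fun z => aux_contr p f g z
  have hm : AEStronglyMeasurable (contrHalf (p + p) f g) (μpos (p + p)) := by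
    apply aux_memLp_of_glue
    rw [e]
    exact aux_aesm _ hF hG
  have hb : eLpNorm (contrHalf (p + p) f g) 2 (μpos (p + p)) ≤
      eLpNorm f 2 (μpos (p + p)) * eLpNorm g 2 (μpos (p + p)) := by
    rw [← eLpNorm_comp_measurePreserving hm (aux_glue_mp (eStr p)),
      ← eLpNorm_comp_measurePreserving hf.1 (aux_glue_mp (eRev p)),
      ← eLpNorm_comp_measurePreserving hg.1 (aux_glue_mp (eStr p)), e]
    exact aux_bound _ hF hG
  exact ⟨⟨hm, hb.trans_lt (ENNReal.mul_lt_top hf.2 hg.2)⟩, hb⟩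

lemma aux_contr_sub (p : ℕ) {f f' g : (Fin (p + p) → ℝ) → ℂ}
    (hf : MemLp f 2 (μpos (p + p))) (hf' : MemLp f' 2 (μpos (p + p)))
    (hg : MemLp g 2 (μpos (p + p))) :
    contrHalf (p + p) f g - contrHalf (p + p) f' g =ᵐ[μpos (p + p)]
      contrHalf (p + p) (f - f') g := by
  have hF := hf.comp_measurePreserving (aux_glue_mp (eRev p))
  have hF' := hf'.comp_measurePreserving (aux_glue_mp (eRev p))
  have hG := hg.comp_measurePreserving (aux_glue_mp (eStr p))
  rw [Filter.EventuallyEq, ← (aux_glue_mp (eStr p)).map_eq, (aux_glue_emb (eStr p)).ae_map_iff]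
  filter_upwards [aux_ae_both _ hF hG, aux_ae_both _ hF' hG] with z h1 h2
  rw [Pi.sub_apply, aux_contr, aux_contr, aux_contr]
  rw [← integral_sub]
  · congr 1; funext s; simp only [Pi.sub_apply]; ring
  · exact h1.1.integrable_mul h1.2
  · exact h2.1.integrable_mul h2.2

lemma aux_L2norm (n : ℕ) {f : (Fin n → ℝ) → ℂ} (hf : MemLp f 2 (μpos n)) :
    eLpNorm f 2 (μpos n) = ENNReal.ofReal (L2norm n f) := by
  rw [hf.eLpNorm_eq_integral_rpow_norm (by norm_num) (by norm_num), L2norm, Real.sqrt_eq_rpow]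
  norm_num

lemma aux_L2inner_self (n : ℕ) {f : (Fin n → ℝ) → ℂ} :
    L2norm n f = Real.sqrt (L2inner n f f).re := by
  rw [L2norm, L2inner]
  simp only [Complex.mul_conj', ← Complex.ofReal_pow]
  rw [integral_complex_ofReal, Complex.ofReal_re]

lemma aux_L2inner_bound (n : ℕ) {f g : (Fin n → ℝ) → ℂ} (hf : MemLp f 2 (μpos n))
    (hg : MemLp g 2 (μpos n)) :
    ‖L2inner n f g‖ₑ ≤ eLpNorm f 2 (μpos n) * eLpNorm g 2 (μpos n) := by
  have h := aux_cs (μpos n) hf.1 hg.star.1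
  refine h.trans (le_of_eq ?_)
  congr 1
  exact eLpNorm_congr_norm_ae (Filter.Eventually.of_forall fun x => by simp)

lemma aux_L2inner_sub (n : ℕ) {f f' g : (Fin n → ℝ) → ℂ} (hf : MemLp f 2 (μpos n))
    (hf' : MemLp f' 2 (μpos n)) (hg : MemLp g 2 (μpos n)) :
    L2inner n (f - f') g = L2inner n f g - L2inner n f' g := by
  unfold L2inner
  rw [← integral_sub]
  · congr 1; funext s; simp only [Pi.sub_apply]; ring
  · exact hf.integrable_mul hg.star
  · exact hf'.integrable_mul hg.star

lemma aux_main (p : ℕ) (lam : ℝ) (f : ℕ → ℕ → (Fin (p + p) → ℝ) → ℂ)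
    (hmem : ∀ n i, MeasureTheory.MemLp (f n i) 2 (μpos (p + p)))
    (hinner : ∀ i j, Filter.Tendsto (fun n => L2inner (p + p) (f n i) (f n j)) Filter.atTop
      (nhds (lam : ℂ)))
    (hcontr : ∀ i j, Filter.Tendsto
      (fun n => L2norm (p + p) (fun t => contrHalf (p + p) (f n i) (f n j) t - f n j t))
      Filter.atTop (nhds 0))
    (idx : ℕ → ℕ) (k : ℕ) :
    (∀ n, MemLp (((List.range k).map fun j => f n (idx (j + 2))).foldl
          (contrHalf (p + p)) (f n (idx 1))) 2 (μpos (p + p))) ∧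
    Filter.Tendsto (fun n => eLpNorm
        (((List.range k).map fun j => f n (idx (j + 2))).foldl
          (contrHalf (p + p)) (f n (idx 1)) - f n (idx (k + 1))) 2 (μpos (p + p)))
      Filter.atTop (nhds 0) := by
  induction k with
  | zero => exact ⟨fun n => by simpa using hmem n _, by simp⟩
  | succ k ih =>
    obtain ⟨ihm, iht⟩ := ih
    simp only [List.range_succ, List.map_append, List.map_cons, List.map_nil, List.foldl_append,
      List.foldl_cons, List.foldl_nil]
    generalize hT : (fun n => ((List.range k).map fun j => f n (idx (j + 2))).foldl
          (contrHalf (p + p)) (f n (idx 1))) = T at *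
    have hT' := fun n => congrFun hT n
    simp only [hT'] at *
    refine ⟨fun n => (aux_contr_bound p (ihm n) (hmem n _)).1, ?_⟩
    have hn : Tendsto (fun n => eLpNorm (f n (idx (k + 2))) 2 (μpos (p + p))) atTop
        (𝓝 (ENNReal.ofReal (Real.sqrt lam))) := by
      simp_rw [fun n => aux_L2norm (p + p) (hmem n (idx (k + 2))), aux_L2inner_self]
      have := (Complex.continuous_re.tendsto _).comp (hinner (idx (k + 2)) (idx (k + 2)))
      exact ENNReal.tendsto_ofReal ((Real.continuous_sqrt.tendsto _).comp this)
    have h1 := ENNReal.Tendsto.mul iht (Or.inr ENNReal.ofReal_ne_top) hn (Or.inr ENNReal.zero_ne_top)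
    have h2 := ENNReal.tendsto_ofReal (hcontr (idx (k + 1)) (idx (k + 2)))
    have h3 := h1.add h2
    simp only [zero_mul, ENNReal.ofReal_zero, add_zero] at h3
    refine tendsto_of_tendsto_of_tendsto_of_le_of_le tendsto_const_nhds h3 (fun n => zero_le) ?_
    intro n
    have hA := aux_contr_bound p ((ihm n).sub (hmem n (idx (k + 1)))) (hmem n (idx (k + 2)))
    have hC := aux_contr_bound p (hmem n (idx (k + 1))) (hmem n (idx (k + 2)))
    have hB : MemLp (contrHalf (p + p) (f n (idx (k + 1))) (f n (idx (k + 2)))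
        - f n (idx (k + 2))) 2 (μpos (p + p)) := hC.1.sub (hmem n _)
    have hs := aux_contr_sub p (ihm n) (hmem n (idx (k + 1))) (hmem n (idx (k + 2)))
    have he : contrHalf (p + p) (T n) (f n (idx (k + 2))) - f n (idx (k + 1 + 1))
        =ᵐ[μpos (p + p)] contrHalf (p + p) (T n - f n (idx (k + 1))) (f n (idx (k + 2))) +
          (contrHalf (p + p) (f n (idx (k + 1))) (f n (idx (k + 2))) - f n (idx (k + 2))) := by
      filter_upwards [hs] with x hx
      simp only [Pi.add_apply, Pi.sub_apply] at hx ⊢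
      rw [← hx]; ring
    show eLpNorm (contrHalf (p + p) (T n) (f n (idx (k + 2))) - f n (idx (k + 1 + 1))) 2 _ ≤ _
    rw [eLpNorm_congr_ae he]
    refine (eLpNorm_add_le hA.1.1 hB.1 (by norm_num)).trans ?_
    refine add_le_add hA.2 (le_of_eq ?_)
    exact aux_L2norm _ hB

/-- when all inner products tend to the same `λ > 0` and all
`‖f_n^{(i)} ⌢_{q/2} f_n^{(j)} - f_n^{(j)}‖ → 0`, every iterated `q/2`-contraction
paired with one more function converges to `λ`. -/
theorem iterated_half_contraction_inner_limit_lambda (q : ℕ) (hq2 : 2 ≤ q) (hqe : q % 2 = 0)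
    (lam : ℝ) (hlam : 0 < lam)
    (f : ℕ → ℕ → (Fin q → ℝ) → ℂ)
    (hmem : ∀ n i, MeasureTheory.MemLp (f n i) 2 (μpos q))
    (hsym : ∀ n i, IsSymmFn q (f n i))
    (hinner : ∀ i j, Filter.Tendsto (fun n => L2inner q (f n i) (f n j)) Filter.atTop
      (nhds (lam : ℂ)))
    (hcontr : ∀ i j, Filter.Tendsto
      (fun n => L2norm q (fun t => contrHalf q (f n i) (f n j) t - f n j t))
      Filter.atTop (nhds 0))
    (k : ℕ) (hk : 1 ≤ k) (idx : ℕ → ℕ) :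
    Filter.Tendsto (fun n => L2inner q
        (((List.range (k - 1)).map fun j => f n (idx (j + 2))).foldl
          (contrHalf q) (f n (idx 1)))
        (f n (idx (k + 1))))
      Filter.atTop (nhds (lam : ℂ)) := by
  obtain ⟨p, rfl⟩ : ∃ p, q = p + p := ⟨q / 2, by omega⟩
  obtain ⟨k, rfl⟩ : ∃ m, k = m + 1 := ⟨k - 1, by omega⟩
  obtain ⟨hm, ht⟩ := aux_main p lam f hmem hinner hcontr idx k
  simp only [Nat.add_sub_cancel]
  generalize hT : (fun n => ((List.range k).map fun j => f n (idx (j + 2))).foldl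
        (contrHalf (p + p)) (f n (idx 1))) = T at *
  have hT' := fun n => congrFun hT n
  simp only [hT'] at *
  have hn : Tendsto (fun n => eLpNorm (f n (idx (k + 2))) 2 (μpos (p + p))) atTop
      (𝓝 (ENNReal.ofReal (Real.sqrt lam))) := by
    simp_rw [fun n => aux_L2norm (p + p) (hmem n (idx (k + 2))), aux_L2inner_self]
    have := (Complex.continuous_re.tendsto _).comp (hinner (idx (k + 2)) (idx (k + 2)))
    exact ENNReal.tendsto_ofReal ((Real.continuous_sqrt.tendsto _).comp this)
  have h1 := ENNReal.Tendsto.mul ht (Or.inr ENNReal.ofReal_ne_top) hn (Or.inr ENNReal.zero_ne_top)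
  rw [zero_mul] at h1
  have h2 : Tendsto (fun n => L2inner (p + p) (T n - f n (idx (k + 1))) (f n (idx (k + 2))))
      atTop (𝓝 0) := by
    rw [tendsto_zero_iff_enorm_tendsto_zero]
    exact tendsto_of_tendsto_of_tendsto_of_le_of_le tendsto_const_nhds h1 (fun n => zero_le)
      (fun n => aux_L2inner_bound _ ((hm n).sub (hmem n _)) (hmem n _))
  have h3 := h2.add (hinner (idx (k + 1)) (idx (k + 2)))
  rw [zero_add] at h3
  refine h3.congr fun n => ?_
  rw [aux_L2inner_sub _ (hm n) (hmem n _) (hmem n _)]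
  simp

end
end

section
/- Let q ≥ 3 be an odd integer and λ > 0. Let {f_{n,i} : n, i ∈ ℕ} be a bi-indexed family of symmetric functions in L²(ℝ₊^q) such that for each i there are constants M_i, L_i and q-dimensional squares S_{n,i} ⊂ ℝ₊^q with |f_{n,i}| ≤ M_i almost everywhere for all n, f_{n,i} = 0 almost everywhere outside S_{n,i}, and μ(S_{n,i}) ≤ L_i for all n. Assume ⟨f_{n,i}, f_{n,j}⟩ → λ and ‖f_{n,i} ⋆_{(q+1)/2}^{(q−1)/2} f_{n,j} − f_{n,j}‖ → 0 as n → ∞, for all i, j ∈ ℕ. Then for every k ≥ 1 and all indices j₁, …, j_{k+1} ∈ ℕ, the scalar ((⋯((f_{n,j₁} ⋆_{(q+1)/2}^{(q−1)/2} f_{n,j₂}) ⋆_{(q+1)/2}^{(q−1)/2} f_{n,j₃})⋯) ⋆_{(q+1)/2}^{(q−1)/2} f_{n,j_k}) ⌢_q f_{n,j_{k+1}} converges to λ as n → ∞. -/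
open MeasureTheory Filter Topology

noncomputable section

section AbstractKernel

variable {α β : Type*} [MeasurableSpace α] [MeasurableSpace β]

lemma qmp_one (μ : Measure α) (ν : Measure β) [SigmaFinite μ] [SigmaFinite ν] :
    Measure.QuasiMeasurePreserving
      (fun w : (β × α × α) × α => (w.1.1, w.1.2.1, w.2))
      ((ν.prod (μ.prod μ)).prod μ) (ν.prod (μ.prod μ)) := by
  have h1 : Measure.QuasiMeasurePreserving (fun z : β × α × α => (z.1, z.2.1))
      (ν.prod (μ.prod μ)) (ν.prod μ) :=
    QuasiMeasurePreserving.prodMap (Measure.QuasiMeasurePreserving.id ν) Measure.quasiMeasurePreserving_fst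
  have h2 := QuasiMeasurePreserving.prodMap h1 (Measure.QuasiMeasurePreserving.id μ)
  exact (measurePreserving_prodAssoc ν μ μ).quasiMeasurePreserving.comp h2

lemma qmp_two (μ : Measure α) (ν : Measure β) [SigmaFinite μ] [SigmaFinite ν] :
    Measure.QuasiMeasurePreserving
      (fun w : (β × α × α) × α => (w.1.1, w.2, w.1.2.2))
      ((ν.prod (μ.prod μ)).prod μ) (ν.prod (μ.prod μ)) := by
  have h1 : Measure.QuasiMeasurePreserving (fun z : β × α × α => (z.1, z.2.2))
      (ν.prod (μ.prod μ)) (ν.prod μ) :=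
    QuasiMeasurePreserving.prodMap (Measure.QuasiMeasurePreserving.id ν) Measure.quasiMeasurePreserving_snd
  have h2 := QuasiMeasurePreserving.prodMap h1 (Measure.QuasiMeasurePreserving.id μ)
  have h3 := (measurePreserving_prodAssoc ν μ μ).quasiMeasurePreserving.comp h2
  have h4 := QuasiMeasurePreserving.prodMap (Measure.QuasiMeasurePreserving.id ν)
    (Measure.measurePreserving_swap (μ := μ) (ν := μ)).quasiMeasurePreserving
  exact h4.comp h3

lemma cs_sq (μ : Measure α) {f g : α → ENNReal} (hf : AEMeasurable f μ) (hg : AEMeasurable g μ) :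
    (∫⁻ s, f s * g s ∂μ) ^ 2 ≤ (∫⁻ s, f s ^ 2 ∂μ) * ∫⁻ s, g s ^ 2 ∂μ := by
  have h := ENNReal.lintegral_mul_le_Lp_mul_Lq μ Real.HolderConjugate.two_two hf hg
  have h2 := pow_le_pow_left' h 2
  refine h2.trans (le_of_eq ?_)
  rw [mul_pow]
  simp only [← ENNReal.rpow_natCast, ← ENNReal.rpow_mul]
  norm_num

lemma kernel_bound_meas (μ : Measure α) (ν : Measure β) [SigmaFinite μ] [SigmaFinite ν]
    {h g : β × α × α → ENNReal} (hh : Measurable h) (hg : Measurable g) (C : ENNReal)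
    (hC : ∀ᵐ u ∂ν, ∫⁻ z, g (u, z) ^ 2 ∂(μ.prod μ) ≤ C) :
    ∫⁻ z, (∫⁻ s, h (z.1, z.2.1, s) * g (z.1, s, z.2.2) ∂μ) ^ 2 ∂(ν.prod (μ.prod μ))
      ≤ C * ∫⁻ z, h z ^ 2 ∂(ν.prod (μ.prod μ)) := by
  set A : β → α → ENNReal := fun u x => ∫⁻ s, h (u, x, s) ^ 2 ∂μ with hA
  set B : β → α → ENNReal := fun u y => ∫⁻ s, g (u, s, y) ^ 2 ∂μ with hB
  have mA : Measurable (Function.uncurry A) := by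
    apply Measurable.lintegral_prod_right' (f := fun p : (β × α) × α => h (p.1.1, p.1.2, p.2) ^ 2)
    fun_prop
  have mB : Measurable (Function.uncurry B) := by
    apply Measurable.lintegral_prod_right' (f := fun p : (β × α) × α => g (p.1.1, p.2, p.1.2) ^ 2)
    fun_prop
  have mA' : ∀ u, Measurable (A u) := fun u => mA.comp (measurable_const.prodMk measurable_id)
  have mB' : ∀ u, Measurable (B u) := fun u => mB.comp (measurable_const.prodMk measurable_id)
  calc _ ≤ ∫⁻ z, A z.1 z.2.1 * B z.1 z.2.2 ∂(ν.prod (μ.prod μ)) := by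
        apply lintegral_mono
        intro z
        apply cs_sq
        · exact (hh.comp (by fun_prop)).aemeasurable
        · exact (hg.comp (by fun_prop)).aemeasurable
    _ = ∫⁻ u, (∫⁻ x, A u x ∂μ) * (∫⁻ y, B u y ∂μ) ∂ν := by
        rw [lintegral_prod]
        · apply lintegral_congr
          intro u
          exact lintegral_prod_mul (mA' u).aemeasurable (mB' u).aemeasurable
        · apply Measurable.aemeasurable
          exact (mA.comp (f := fun z : β × α × α => (z.1, z.2.1)) (by fun_prop)).mul
            (mB.comp (f := fun z : β × α × α => (z.1, z.2.2)) (by fun_prop))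
    _ ≤ ∫⁻ u, C * (∫⁻ x, A u x ∂μ) ∂ν := by
        apply lintegral_mono_ae
        filter_upwards [hC] with u hu
        rw [mul_comm]
        gcongr
        refine le_trans (le_of_eq ?_) hu
        rw [lintegral_prod_symm']
        exact (hg.comp (by fun_prop)).pow_const 2
    _ = _ := by
        have mA3 : Measurable fun u => ∫⁻ x, A u x ∂μ := mA.lintegral_prod_right'
        rw [lintegral_const_mul _ mA3, lintegral_prod _ (by fun_prop)]
        congr 1
        apply lintegral_congr
        intro u
        rw [lintegral_prod _ (by fun_prop)]

lemma kernel_bound_ae (μ : Measure α) (ν : Measure β) [SigmaFinite μ] [SigmaFinite ν]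
    {h g : β × α × α → ENNReal} (hh : AEMeasurable h (ν.prod (μ.prod μ)))
    (hg : AEMeasurable g (ν.prod (μ.prod μ))) (C : ENNReal)
    (hC : ∀ᵐ u ∂ν, ∫⁻ z, g (u, z) ^ 2 ∂(μ.prod μ) ≤ C) :
    ∫⁻ z, (∫⁻ s, h (z.1, z.2.1, s) * g (z.1, s, z.2.2) ∂μ) ^ 2 ∂(ν.prod (μ.prod μ))
      ≤ C * ∫⁻ z, h z ^ 2 ∂(ν.prod (μ.prod μ)) := by
  have h1 := Measure.ae_ae_of_ae_prod ((qmp_one μ ν).ae hh.ae_eq_mk)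
  have h2 := Measure.ae_ae_of_ae_prod ((qmp_two μ ν).ae hg.ae_eq_mk)
  have e1 : ∫⁻ z, (∫⁻ s, h (z.1, z.2.1, s) * g (z.1, s, z.2.2) ∂μ) ^ 2 ∂(ν.prod (μ.prod μ))
      = ∫⁻ z, (∫⁻ s, hh.mk h (z.1, z.2.1, s) * hg.mk g (z.1, s, z.2.2) ∂μ) ^ 2
        ∂(ν.prod (μ.prod μ)) := by
    apply lintegral_congr_ae
    filter_upwards [h1, h2] with z a b
    congr 1
    apply lintegral_congr_ae
    filter_upwards [a, b] with s a b
    rw [a, b]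
  have e2 : ∫⁻ z, h z ^ 2 ∂(ν.prod (μ.prod μ)) = ∫⁻ z, hh.mk h z ^ 2 ∂(ν.prod (μ.prod μ)) := by
    apply lintegral_congr_ae
    filter_upwards [hh.ae_eq_mk] with z a
    rw [a]
  rw [e1, e2]
  apply kernel_bound_meas μ ν hh.measurable_mk hg.measurable_mk
  filter_upwards [hC, Measure.ae_ae_of_ae_prod hg.ae_eq_mk] with u hu hu2
  refine le_trans (le_of_eq ?_) hu
  apply lintegral_congr_ae
  filter_upwards [hu2] with z a
  rw [a]

/-- Composition of fibred kernels. -/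
def kerComp (μ : Measure α) (H G : β × α × α → ℂ) (z : β × α × α) : ℂ :=
  ∫ s, H (z.1, z.2.1, s) * G (z.1, s, z.2.2) ∂μ

lemma eLpNorm_two_sq {γ : Type*} [MeasurableSpace γ] (ρ : Measure γ) (F : γ → ℂ) :
    eLpNorm F 2 ρ ^ 2 = ∫⁻ z, ‖F z‖ₑ ^ 2 ∂ρ := by
  have := eLpNorm_nnreal_pow_eq_lintegral (μ := ρ) (f := F) (p := 2) (by norm_num)
  simpa using this

lemma kerComp_aesm (μ : Measure α) (ν : Measure β) [SigmaFinite μ] [SigmaFinite ν]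
    {H G : β × α × α → ℂ} (hH : AEStronglyMeasurable H (ν.prod (μ.prod μ)))
    (hG : AEStronglyMeasurable G (ν.prod (μ.prod μ))) :
    AEStronglyMeasurable (kerComp μ H G) (ν.prod (μ.prod μ)) :=
  ((hH.comp_quasiMeasurePreserving (qmp_one μ ν)).mul
    (hG.comp_quasiMeasurePreserving (qmp_two μ ν))).integral_prod_right'

lemma kerComp_bound (μ : Measure α) (ν : Measure β) [SigmaFinite μ] [SigmaFinite ν]
    {H G : β × α × α → ℂ} (hH : AEStronglyMeasurable H (ν.prod (μ.prod μ)))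
    (hG : AEStronglyMeasurable G (ν.prod (μ.prod μ))) (C : ENNReal)
    (hC : ∀ᵐ u ∂ν, ∫⁻ z, ‖G (u, z)‖ₑ ^ 2 ∂(μ.prod μ) ≤ C) :
    eLpNorm (kerComp μ H G) 2 (ν.prod (μ.prod μ)) ^ 2 ≤
      C * eLpNorm H 2 (ν.prod (μ.prod μ)) ^ 2 := by
  rw [eLpNorm_two_sq, eLpNorm_two_sq]
  refine le_trans ?_ (kernel_bound_ae μ ν hH.enorm hG.enorm C hC)
  apply lintegral_mono
  intro z
  dsimp only
  gcongr
  refine (enorm_integral_le_lintegral_enorm _).trans (le_of_eq ?_)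
  simp only [enorm_mul]

lemma kerComp_integrable (μ : Measure α) (ν : Measure β) [SigmaFinite μ] [SigmaFinite ν]
    {H G : β × α × α → ℂ} (hH : MemLp H 2 (ν.prod (μ.prod μ)))
    (hG : AEStronglyMeasurable G (ν.prod (μ.prod μ))) (C : ENNReal) (hCt : C ≠ ⊤)
    (hC : ∀ᵐ u ∂ν, ∫⁻ z, ‖G (u, z)‖ₑ ^ 2 ∂(μ.prod μ) ≤ C) :
    ∀ᵐ z ∂(ν.prod (μ.prod μ)),
      Integrable (fun s => H (z.1, z.2.1, s) * G (z.1, s, z.2.2)) μ := by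
  have hm := (hH.1.comp_quasiMeasurePreserving (qmp_one μ ν)).mul
    (hG.comp_quasiMeasurePreserving (qmp_two μ ν))
  have hb := kernel_bound_ae μ ν hH.1.enorm hG.enorm C hC
  have hfin : ∫⁻ z, (∫⁻ s, ‖H (z.1, z.2.1, s)‖ₑ * ‖G (z.1, s, z.2.2)‖ₑ ∂μ) ^ 2
      ∂(ν.prod (μ.prod μ)) ≠ ⊤ := by
    refine ne_top_of_le_ne_top ?_ hb
    rw [← eLpNorm_two_sq]
    exact ENNReal.mul_ne_top hCt (ENNReal.pow_ne_top hH.2.ne)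
  have hae := ae_lt_top' (by
    have := hm.enorm.lintegral_prod_right'
    simp only [Pi.mul_apply, enorm_mul, Function.comp] at this
    exact this.pow_const 2) hfin
  filter_upwards [hae, hm.prodMk_left] with z hz hmz
  refine ⟨hmz, ?_⟩
  unfold HasFiniteIntegral
  simp only [enorm_mul]
  by_contra hcon
  rw [not_lt, top_le_iff] at hcon
  rw [hcon] at hz
  simp at hz

lemma kerComp_sub (μ : Measure α) (ν : Measure β) [SigmaFinite μ] [SigmaFinite ν]
    {H₁ H₂ G : β × α × α → ℂ} (hH₁ : MemLp H₁ 2 (ν.prod (μ.prod μ)))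
    (hH₂ : MemLp H₂ 2 (ν.prod (μ.prod μ)))
    (hG : AEStronglyMeasurable G (ν.prod (μ.prod μ))) (C : ENNReal) (hCt : C ≠ ⊤)
    (hC : ∀ᵐ u ∂ν, ∫⁻ z, ‖G (u, z)‖ₑ ^ 2 ∂(μ.prod μ) ≤ C) :
    kerComp μ (H₁ - H₂) G =ᵐ[ν.prod (μ.prod μ)] kerComp μ H₁ G - kerComp μ H₂ G := by
  filter_upwards [kerComp_integrable μ ν hH₁ hG C hCt hC,
    kerComp_integrable μ ν hH₂ hG C hCt hC] with z h1 h2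
  simp only [kerComp, Pi.sub_apply, sub_mul]
  exact integral_sub h1 h2

end AbstractKernel

section Coordinates

/-- Lebesgue measure on the half line. -/
def nuHalf : Measure ℝ := volume.restrict (Set.Ici 0)

instance nuHalf_sigmaFinite : SigmaFinite nuHalf := by
  unfold nuHalf; infer_instance

lemma μpos_eq_pi (n : ℕ) : μpos n = Measure.pi fun _ => nuHalf := by
  unfold μpos nuHalf posOrthant
  rw [← Measure.restrict_pi_pi]
  congr 1
  ext x
  simp [Set.mem_pi]
  exact Iff.rfl

instance μpos_sigmaFinite (n : ℕ) : SigmaFinite (μpos n) := by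
  unfold μpos; infer_instance

lemma pad_of_lt {k : ℕ} (t : Fin k → ℝ) {i : ℕ} (h : i < k) : pad t i = t ⟨i, h⟩ := by
  simp [pad, h]

lemma measurable_pad {k : ℕ} (i : ℕ) : Measurable fun t : Fin k → ℝ => pad t i := by
  unfold pad
  split_ifs <;> fun_prop

/-- Splitting `2r+1` coordinates into the middle one and two blocks. -/
def psi (r : ℕ) : (ℝ × (Fin r → ℝ) × (Fin r → ℝ)) ≃ᵐ (Fin (r + 1 + r) → ℝ) where
  toFun z j := if (j : ℕ) < r then pad z.2.1 j else
    if (j : ℕ) = r then z.1 else pad z.2.2 (j - (r + 1))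
  invFun t := (t ⟨r, by omega⟩, fun i => t ⟨i, by omega⟩, fun i => t ⟨r + 1 + i, by omega⟩)
  left_inv := by
    rintro ⟨u, x, y⟩
    simp only [Prod.mk.injEq]
    refine ⟨by simp, ?_, ?_⟩
    · funext i
      simp [pad]
    · funext i
      have h1 : ¬ (r + 1 + (i : ℕ) < r) := by omega
      have h2 : ¬ (r + 1 + (i : ℕ) = r) := by omega
      simp [pad, h1, h2]
  right_inv := by
    intro t
    funext j
    dsimp only
    have hj := j.2
    split_ifs with h1 h2
    · rw [pad_of_lt _ h1]
    · congr 1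
      exact Fin.ext h2.symm
    · rw [pad_of_lt _ (by omega)]
      congr 1
      apply Fin.ext
      dsimp only
      omega
  measurable_toFun := by
    rw [measurable_pi_iff]
    intro j
    dsimp only [Equiv.coe_fn_mk]
    split_ifs
    · exact (measurable_pad _).comp (by fun_prop)
    · fun_prop
    · exact (measurable_pad _).comp (by fun_prop)
  measurable_invFun := by
    dsimp only [Equiv.coe_fn_symm_mk]
    fun_prop

lemma psi_apply (r : ℕ) (z : ℝ × (Fin r → ℝ) × (Fin r → ℝ)) (j : Fin (r + 1 + r)) :
    psi r z j = if (j : ℕ) < r then pad z.2.1 j else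
      if (j : ℕ) = r then z.1 else pad z.2.2 (j - (r + 1)) := rfl

lemma psi_left (r : ℕ) (z : ℝ × (Fin r → ℝ) × (Fin r → ℝ)) (i : Fin r) :
    psi r z (Fin.castAdd r (Fin.castSucc i)) = z.2.1 i := by
  rw [psi_apply, if_pos (by simp), pad_of_lt _ (by simp)]
  congr 1

lemma psi_mid (r : ℕ) (z : ℝ × (Fin r → ℝ) × (Fin r → ℝ)) :
    psi r z (Fin.castAdd r (Fin.last r)) = z.1 := by
  rw [psi_apply, if_neg (by simp), if_pos (by simp)]

lemma psi_right (r : ℕ) (z : ℝ × (Fin r → ℝ) × (Fin r → ℝ)) (i : Fin r) :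
    psi r z (Fin.natAdd (r + 1) i) = z.2.2 i := by
  rw [psi_apply, if_neg (by simp; omega), if_neg (by simp; omega), pad_of_lt _ (by simp)]
  have e : (⟨((Fin.natAdd (r + 1) i : Fin (r + 1 + r)) : ℕ) - (r + 1), by simp⟩ : Fin r) = i := by
    apply Fin.ext
    simp
  exact congrArg z.2.2 e

lemma psi_mem_pi (r : ℕ) (S : Fin (r + 1 + r) → Set ℝ) (z : ℝ × (Fin r → ℝ) × (Fin r → ℝ)) :
    psi r z ∈ Set.univ.pi S ↔ z ∈ (S (Fin.castAdd r (Fin.last r))) ×ˢ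
      ((Set.univ.pi fun i : Fin r => S (Fin.castAdd r (Fin.castSucc i))) ×ˢ
        (Set.univ.pi fun i : Fin r => S (Fin.natAdd (r + 1) i))) := by
  simp only [Set.mem_pi, Set.mem_univ, true_imp_iff, Set.mem_prod]
  constructor
  · intro h
    refine ⟨?_, ?_, ?_⟩
    · rw [← psi_mid]; exact h _
    · intro i; rw [← psi_left]; exact h _
    · intro i; rw [← psi_right]; exact h _
  · rintro ⟨h1, h2, h3⟩ j
    refine Fin.addCases (fun j => ?_) (fun j => ?_) j
    · refine Fin.lastCases ?_ (fun j => ?_) j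
      · rw [psi_mid]; exact h1
      · rw [psi_left]; exact h2 j
    · rw [psi_right]; exact h3 j

lemma psi_mp (r : ℕ) : MeasurePreserving (psi r)
    (nuHalf.prod ((μpos r).prod (μpos r))) (μpos (r + 1 + r)) := by
  refine ⟨(psi r).measurable, ?_⟩
  rw [μpos_eq_pi, μpos_eq_pi]
  symm
  apply Measure.pi_eq
  intro s hs
  rw [MeasurableEquiv.map_apply]
  have : psi r ⁻¹' Set.univ.pi s = (s (Fin.castAdd r (Fin.last r))) ×ˢ
      ((Set.univ.pi fun i : Fin r => s (Fin.castAdd r (Fin.castSucc i))) ×ˢ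
        (Set.univ.pi fun i : Fin r => s (Fin.natAdd (r + 1) i))) := by
    ext z
    exact psi_mem_pi r s z
  rw [this, Measure.prod_prod, Measure.prod_prod, Measure.pi_pi, Measure.pi_pi,
    Fin.prod_univ_add, Fin.prod_univ_castSucc]
  ring

/-- Coordinate reversal. -/
def revMap (r : ℕ) : (Fin r → ℝ) → (Fin r → ℝ) := fun s i => s i.rev

lemma revMap_mp (r : ℕ) : MeasurePreserving (revMap r) (μpos r) (μpos r) := by
  rw [μpos_eq_pi]
  refine ⟨by unfold revMap; fun_prop, ?_⟩
  symm
  apply Measure.pi_eq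
  intro s hs
  rw [Measure.map_apply (by unfold revMap; fun_prop) (MeasurableSet.univ_pi hs)]
  have : revMap r ⁻¹' Set.univ.pi s = Set.univ.pi fun i => s i.rev := by
    ext x
    simp only [revMap, Set.mem_preimage, Set.mem_pi, Set.mem_univ, true_imp_iff]
    constructor
    · intro h i
      have := h i.rev
      rwa [Fin.rev_rev] at this
    · intro h i
      have := h i.rev
      rwa [Fin.rev_rev] at this
  rw [this, Measure.pi_pi]
  exact Equiv.prod_comp Fin.revPerm (fun i => nuHalf (s i))

/-- Splitting with the last block reversed. -/
def psiR (r : ℕ) (z : ℝ × (Fin r → ℝ) × (Fin r → ℝ)) : Fin (r + 1 + r) → ℝ :=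
  psi r (z.1, z.2.1, revMap r z.2.2)

lemma psiR_mp (r : ℕ) : MeasurePreserving (psiR r)
    (nuHalf.prod ((μpos r).prod (μpos r))) (μpos (r + 1 + r)) := by
  have h := (MeasurePreserving.id nuHalf).prod ((MeasurePreserving.id (μpos r)).prod (revMap_mp r))
  exact (psi_mp r).comp h

/-- The star contraction, with exactly `q = 2r+1` variables. -/
def star' (q : ℕ) (h : q + q + 1 - 2 * ((q + 1) / 2) = q) (F G : (Fin q → ℝ) → ℂ) :
    (Fin q → ℝ) → ℂ := reindex h (starC q q ((q + 1) / 2) F G)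

lemma star_psi_aux (r p : ℕ) (hp : p = r + 1)
    (h : (r + 1 + r) + (r + 1 + r) + 1 - 2 * p = r + 1 + r)
    (F G : (Fin (r + 1 + r) → ℝ) → ℂ) (z : ℝ × (Fin r → ℝ) × (Fin r → ℝ)) :
    reindex h (starC (r + 1 + r) (r + 1 + r) p F G) (psi r z) =
      kerComp (μpos r) (F ∘ psiR r) (G ∘ psi r) z := by
  subst hp
  unfold reindex starC kerComp μpos
  refine integral_congr_ae (Filter.Eventually.of_forall fun s => ?_)
  simp only [starKer, Function.comp]
  change F _ * G _ = F _ * G _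
  congr 2
  · funext j
    have hj := j.2
    rw [psiR, psi_apply]
    by_cases h1 : (j : ℕ) < r
    · rw [if_pos (by omega), if_pos h1, pad_of_lt _ (by omega)]
      rw [psi_apply, if_pos (by simpa using h1)]
      rfl
    · by_cases h2 : (j : ℕ) = r
      · rw [if_pos (by omega), if_neg h1, if_pos h2, pad_of_lt _ (by omega)]
        rw [psi_apply, if_neg (by simpa using h1), if_pos (by simpa using h2)]
      · rw [if_neg (by omega), if_neg h1, if_neg h2, pad_of_lt _ (by omega),
          pad_of_lt _ (by omega)]
        simp only [revMap]
        congr 1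
        apply Fin.ext
        simp only [Fin.val_rev]
        omega
  · funext j
    have hj := j.2
    rw [psi_apply]
    by_cases h1 : (j : ℕ) < r
    · rw [if_pos (by omega), if_pos h1]
    · rw [if_neg (by omega), if_neg h1, pad_of_lt _ (by omega), psi_apply,
        if_neg (by simp; omega)]
      have e : r + 1 + r + (j : ℕ) + 1 - 2 * (r + 1) = j := by omega
      by_cases h2 : (j : ℕ) = r
      · rw [if_pos (by simp; omega), if_pos h2]
      · rw [if_neg (by simp; omega), if_neg h2]
        simp only [Fin.val_cast, e]

lemma star_psi (r : ℕ) (h) (F G : (Fin (r + 1 + r) → ℝ) → ℂ) :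
    star' (r + 1 + r) h F G ∘ psi r = kerComp (μpos r) (F ∘ psiR r) (G ∘ psi r) := by
  funext z
  exact star_psi_aux r _ (by omega) h F G z

/-- Uniform bound of the slices of `G` at fixed middle coordinate. -/
def SliceB (r : ℕ) (C : ENNReal) (G : (Fin (r + 1 + r) → ℝ) → ℂ) : Prop :=
  ∀ᵐ u ∂nuHalf, ∫⁻ z, ‖G (psi r (u, z))‖ₑ ^ 2 ∂((μpos r).prod (μpos r)) ≤ C

lemma star_memLp (r : ℕ) (h) {F G : (Fin (r + 1 + r) → ℝ) → ℂ} {C : ENNReal} (hCt : C ≠ ⊤)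
    (hF : MemLp F 2 (μpos (r + 1 + r))) (hG : AEStronglyMeasurable G (μpos (r + 1 + r)))
    (hC : SliceB r C G) :
    MemLp (star' (r + 1 + r) h F G) 2 (μpos (r + 1 + r)) ∧
    eLpNorm (star' (r + 1 + r) h F G) 2 (μpos (r + 1 + r)) ^ 2 ≤
      C * eLpNorm F 2 (μpos (r + 1 + r)) ^ 2 := by
  have hFR := hF.1.comp_measurePreserving (psiR_mp r)
  have hGR := hG.comp_measurePreserving (psi_mp r)
  have h1 := kerComp_aesm (μpos r) nuHalf hFR hGR
  have h2 := kerComp_bound (μpos r) nuHalf hFR hGR C hC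
  rw [← star_psi r h] at h1 h2
  have h3 := ((psi_mp r).aestronglyMeasurable_comp_iff (psi r).measurableEmbedding).1 h1
  rw [eLpNorm_comp_measurePreserving h3 (psi_mp r),
    eLpNorm_comp_measurePreserving hF.1 (psiR_mp r)] at h2
  refine ⟨⟨h3, ?_⟩, h2⟩
  by_contra hcon
  rw [not_lt, top_le_iff] at hcon
  rw [hcon] at h2
  have : C * eLpNorm F 2 (μpos (r + 1 + r)) ^ 2 ≠ ⊤ :=
    ENNReal.mul_ne_top hCt (ENNReal.pow_ne_top hF.2.ne)
  apply this
  rw [← top_le_iff]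
  simpa using h2

lemma starC_sub (r : ℕ) (h) {F₁ F₂ G : (Fin (r + 1 + r) → ℝ) → ℂ} {C : ENNReal} (hCt : C ≠ ⊤)
    (hF₁ : MemLp F₁ 2 (μpos (r + 1 + r))) (hF₂ : MemLp F₂ 2 (μpos (r + 1 + r)))
    (hG : AEStronglyMeasurable G (μpos (r + 1 + r)))
    (hC : SliceB r C G) :
    star' (r + 1 + r) h (F₁ - F₂) G =ᵐ[μpos (r + 1 + r)]
      star' (r + 1 + r) h F₁ G - star' (r + 1 + r) h F₂ G := by
  have hs := kerComp_sub (μpos r) nuHalf (hF₁.comp_measurePreserving (psiR_mp r))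
    (hF₂.comp_measurePreserving (psiR_mp r)) (hG.comp_measurePreserving (psi_mp r)) C hCt hC
  have e : F₁ ∘ psiR r - F₂ ∘ psiR r = (F₁ - F₂) ∘ psiR r := rfl
  rw [e, ← star_psi r h, ← star_psi r h, ← star_psi r h] at hs
  have := ((psi_mp r).symm (psi r)).quasiMeasurePreserving.ae hs
  filter_upwards [this] with t ht
  simpa using ht

end Coordinates

section Main

lemma slice_of_cube (r : ℕ) (hr : 1 ≤ r) {G : (Fin (r + 1 + r) → ℝ) → ℂ} {M L : ℝ}
    {S : Set (Fin (r + 1 + r) → ℝ)} (hS : IsCube (r + 1 + r) S)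
    (hbd : ∀ᵐ t ∂(μpos (r + 1 + r)), ‖G t‖ ≤ M)
    (hsupp : ∀ᵐ t ∂(μpos (r + 1 + r)), t ∉ S → G t = 0)
    (hvol : (volume S).toReal ≤ L) :
    SliceB r (ENNReal.ofReal M ^ 2 * (1 + ENNReal.ofReal L)) G := by
  obtain ⟨a, c, rfl⟩ := hS
  have hv : volume (Set.univ.pi fun i => Set.Icc (a i) (a i + c)) =
      ENNReal.ofReal c ^ (r + 1 + r) := by
    rw [volume_pi_pi]
    simp
  rw [hv] at hvol
  have hc : ENNReal.ofReal c ^ r * ENNReal.ofReal c ^ r ≤ 1 + ENNReal.ofReal L := by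
    rw [← pow_add]
    rcases le_total (ENNReal.ofReal c) 1 with h1 | h1
    · exact (pow_le_one' h1 _).trans le_self_add
    · refine (pow_le_pow_right₀ h1 (show r + r ≤ r + 1 + r by omega)).trans ?_
      refine le_trans ?_ le_add_self
      exact (ENNReal.le_ofReal_iff_toReal_le (by finiteness)
        (ENNReal.toReal_nonneg.trans hvol)).2 hvol
  have hbox : ∀ b : Fin r → ℝ,
      μpos r (Set.univ.pi fun i => Set.Icc (b i) (b i + c)) ≤ ENNReal.ofReal c ^ r := by
    intro b
    refine (Measure.restrict_le_self _).trans (le_of_eq ?_)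
    rw [volume_pi_pi]
    simp
  have hae := (psi_mp r).quasiMeasurePreserving.ae (hbd.and hsupp)
  have hae2 := Measure.ae_ae_of_ae_prod hae
  filter_upwards [hae2] with u hu
  set T : Set ((Fin r → ℝ) × (Fin r → ℝ)) :=
    (Set.univ.pi fun i : Fin r => Set.Icc (a (Fin.castAdd r (Fin.castSucc i)))
      (a (Fin.castAdd r (Fin.castSucc i)) + c)) ×ˢ
    (Set.univ.pi fun i : Fin r => Set.Icc (a (Fin.natAdd (r + 1) i))
      (a (Fin.natAdd (r + 1) i) + c)) with hT
  have hTm : MeasurableSet T :=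
    (MeasurableSet.univ_pi fun _ => measurableSet_Icc).prod
      (MeasurableSet.univ_pi fun _ => measurableSet_Icc)
  calc ∫⁻ z, ‖G (psi r (u, z))‖ₑ ^ 2 ∂((μpos r).prod (μpos r))
      ≤ ∫⁻ z, T.indicator (fun _ => ENNReal.ofReal M ^ 2) z ∂((μpos r).prod (μpos r)) := by
        apply lintegral_mono_ae
        filter_upwards [hu] with z hz
        by_cases hzT : z ∈ T
        · rw [Set.indicator_of_mem hzT]
          gcongr
          rw [← ofReal_norm_eq_enorm]
          exact ENNReal.ofReal_le_ofReal hz.1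
        · rw [Set.indicator_of_notMem hzT, hz.2]
          · simp
          · intro hcon
            exact hzT ((psi_mem_pi r _ _).1 hcon).2
    _ = ENNReal.ofReal M ^ 2 * ((μpos r).prod (μpos r)) T := by
        rw [lintegral_indicator_const hTm]
    _ ≤ _ := by
        gcongr
        rw [hT, Measure.prod_prod]
        exact (mul_le_mul' (hbox _) (hbox _)).trans hc

lemma L2norm_eq (q : ℕ) {h : (Fin q → ℝ) → ℂ} (hh : AEStronglyMeasurable h (μpos q)) :
    L2norm q h = (eLpNorm h 2 (μpos q)).toReal := by
  unfold L2norm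
  rw [integral_eq_lintegral_of_nonneg_ae (Filter.Eventually.of_forall fun _ => by positivity)
    (f := fun x => ‖h x‖ ^ 2) (hh.norm.pow 2)]
  have : ∀ x, ENNReal.ofReal (‖h x‖ ^ 2) = ‖h x‖ₑ ^ 2 := by
    intro x
    rw [ENNReal.ofReal_pow (norm_nonneg _), ofReal_norm_eq_enorm]
  simp only [this]
  rw [← eLpNorm_two_sq, ENNReal.toReal_pow, Real.sqrt_sq ENNReal.toReal_nonneg]

lemma L2inner_self (q : ℕ) (h : (Fin q → ℝ) → ℂ) :
    L2norm q h = Real.sqrt (L2inner q h h).re := by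
  unfold L2norm L2inner
  congr 1
  have : ∀ x, h x * (starRingEnd ℂ) (h x) = ((‖h x‖ ^ 2 : ℝ) : ℂ) := by
    intro x
    rw [Complex.mul_conj, Complex.normSq_eq_norm_sq]
  simp only [this]
  rw [integral_complex_ofReal, Complex.ofReal_re]

lemma pow_le_pow_left_iff_of_two {a b : ENNReal} (h : a ^ 2 ≤ b ^ 2) : a ≤ b := by
  by_contra hcon
  rw [not_le] at hcon
  exact absurd h (not_le.2 (ENNReal.pow_lt_pow_left (by norm_num) hcon))

lemma L2inner_le (q : ℕ) {F G : (Fin q → ℝ) → ℂ} (hF : MemLp F 2 (μpos q))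
    (hG : MemLp G 2 (μpos q)) : ‖L2inner q F G‖ ≤ L2norm q F * L2norm q G := by
  rw [L2norm_eq q hF.1, L2norm_eq q hG.1]
  have h1 : ‖L2inner q F G‖ₑ ^ 2 ≤ (eLpNorm F 2 (μpos q) * eLpNorm G 2 (μpos q)) ^ 2 := by
    rw [mul_pow, eLpNorm_two_sq, eLpNorm_two_sq]
    refine le_trans ?_ (cs_sq _ hF.1.enorm hG.1.enorm)
    gcongr
    refine (enorm_integral_le_lintegral_enorm _).trans (le_of_eq ?_)
    simp only [enorm_mul, RCLike.enorm_conj]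
  have h2 : ‖L2inner q F G‖ₑ ≤ eLpNorm F 2 (μpos q) * eLpNorm G 2 (μpos q) :=
    (pow_le_pow_left_iff_of_two h1)
  have h3 := ENNReal.toReal_mono (ENNReal.mul_ne_top hF.2.ne hG.2.ne) h2
  rwa [toReal_enorm, ENNReal.toReal_mul] at h3

lemma L2inner_integrable (q : ℕ) {F G : (Fin q → ℝ) → ℂ} (hF : MemLp F 2 (μpos q))
    (hG : MemLp G 2 (μpos q)) : Integrable (fun x => F x * (starRingEnd ℂ) (G x)) (μpos q) := by
  have : MemLp (fun x => (starRingEnd ℂ) (G x)) 2 (μpos q) := hG.star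
  exact hF.integrable_mul this

lemma fullContr_eq (q : ℕ) {F G : (Fin q → ℝ) → ℂ} (hG : IsSymmFn q G) :
    fullContr q F G = L2inner q F G := by
  unfold fullContr L2inner
  apply integral_congr_ae
  filter_upwards [hG] with t ht
  rw [ht, adjF]
  simp

lemma main_aux (r : ℕ) (hr : 1 ≤ r) (h) (f : ℕ → ℕ → (Fin (r + 1 + r) → ℝ) → ℂ)
    (hmem : ∀ n i, MemLp (f n i) 2 (μpos (r + 1 + r)))
    (C : ℕ → ENNReal) (hCt : ∀ i, C i ≠ ⊤) (hC : ∀ n i, SliceB r (C i) (f n i))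
    (hstar : ∀ i j, Tendsto (fun n => L2norm (r + 1 + r)
      (star' (r + 1 + r) h (f n i) (f n j) - f n j)) atTop (𝓝 0))
    (idx : ℕ → ℕ) (m : ℕ) :
    (∀ n, MemLp (((List.range m).map fun a => f n (idx (a + 2))).foldl (star' (r + 1 + r) h)
          (f n (idx 1))) 2 (μpos (r + 1 + r))) ∧
    Tendsto (fun n => eLpNorm (((List.range m).map fun a => f n (idx (a + 2))).foldl
      (star' (r + 1 + r) h) (f n (idx 1)) - f n (idx (m + 1))) 2 (μpos (r + 1 + r)))
      atTop (𝓝 0) := by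
  induction m with
  | zero =>
    simp [hmem]
  | succ m ih =>
    obtain ⟨ih1, ih2⟩ := ih
    have hrec : ∀ n, ((List.range (m + 1)).map fun a => f n (idx (a + 2))).foldl
        (star' (r + 1 + r) h) (f n (idx 1)) = star' (r + 1 + r) h
        (((List.range m).map fun a => f n (idx (a + 2))).foldl
          (star' (r + 1 + r) h) (f n (idx 1))) (f n (idx (m + 2))) := by
      intro n
      rw [List.range_succ, List.map_append, List.foldl_append]
      rfl
    simp only [hrec]
    generalize hFdef : (fun n => ((List.range m).map fun a => f n (idx (a + 2))).foldl
          (star' (r + 1 + r) h) (f n (idx 1))) = F at *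
    have hF : ∀ n, ((List.range m).map fun a => f n (idx (a + 2))).foldl
          (star' (r + 1 + r) h) (f n (idx 1)) = F n := fun n => by rw [← hFdef]
    simp only [hF] at ih1 ih2 ⊢
    have hsm : ∀ n (X : (Fin (r + 1 + r) → ℝ) → ℂ), MemLp X 2 (μpos (r + 1 + r)) → _ :=
      fun n X hX => star_memLp r h (hCt (idx (m + 2))) hX (hmem n (idx (m + 2))).1
        (hC n (idx (m + 2)))
    refine ⟨fun n => (hsm n _ (ih1 n)).1, ?_⟩
    have hD : Tendsto (fun n => eLpNorm (star' (r + 1 + r) h (f n (idx (m + 1)))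
        (f n (idx (m + 2))) - f n (idx (m + 2))) 2 (μpos (r + 1 + r))) atTop (𝓝 0) := by
      rw [← ENNReal.tendsto_toReal_zero_iff
        (fun n => (((hsm n _ (hmem n _)).1.sub (hmem n _)).2).ne)]
      refine (hstar (idx (m + 1)) (idx (m + 2))).congr fun n => ?_
      exact L2norm_eq _ (((hsm n _ (hmem n _)).1.sub (hmem n _)).1)
    have hlim : Tendsto (fun n => (1 + C (idx (m + 2))) *
        eLpNorm (F n - f n (idx (m + 1))) 2 (μpos (r + 1 + r)) +
        eLpNorm (star' (r + 1 + r) h (f n (idx (m + 1)))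
        (f n (idx (m + 2))) - f n (idx (m + 2))) 2 (μpos (r + 1 + r))) atTop (𝓝 0) := by
      have h1 := ENNReal.Tendsto.const_mul (a := 1 + C (idx (m + 2))) ih2
        (Or.inr (ENNReal.add_ne_top.2 ⟨ENNReal.one_ne_top, hCt _⟩))
      simpa using h1.add hD
    refine tendsto_of_tendsto_of_tendsto_of_le_of_le tendsto_const_nhds hlim
      (fun n => zero_le) (fun n => ?_)
    have hsub := starC_sub r h (hCt (idx (m + 2))) (ih1 n) (hmem n (idx (m + 1)))
      (hmem n (idx (m + 2))).1 (hC n (idx (m + 2)))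
    have hs1 := hsm n _ ((ih1 n).sub (hmem n (idx (m + 1))))
    have hs2 := (hsm n _ (hmem n (idx (m + 1)))).1.sub (hmem n (idx (m + 2)))
    have heq : star' (r + 1 + r) h (F n) (f n (idx (m + 2))) - f n (idx (m + 2))
        =ᵐ[μpos (r + 1 + r)]
        star' (r + 1 + r) h (F n - f n (idx (m + 1))) (f n (idx (m + 2))) +
        (star' (r + 1 + r) h (f n (idx (m + 1))) (f n (idx (m + 2))) - f n (idx (m + 2))) := by
      filter_upwards [hsub] with t ht
      simp only [Pi.add_apply, Pi.sub_apply] at ht ⊢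
      rw [ht]
      ring
    dsimp only
    have e2 : m + 1 + 1 = m + 2 := rfl
    rw [e2, eLpNorm_congr_ae heq]
    refine (eLpNorm_add_le hs1.1.1 hs2.1 (by norm_num)).trans ?_
    gcongr
    apply pow_le_pow_left_iff_of_two
    refine hs1.2.trans ?_
    rw [mul_pow]
    gcongr
    calc C (idx (m + 2)) ≤ 1 + C (idx (m + 2)) := le_add_self
      _ ≤ (1 + C (idx (m + 2))) ^ 2 := le_self_pow le_self_add (by norm_num)

end Main

/-- for odd `q`, iterated star contractions of index `((q+1)/2,(q-1)/2)`
followed by a full contraction converge to `λ`. -/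
theorem iterated_star_contraction_limit (q : ℕ) (hq3 : 3 ≤ q) (hqo : q % 2 = 1)
    (lam : ℝ) (hlam : 0 < lam)
    (f : ℕ → ℕ → (Fin q → ℝ) → ℂ)
    (hmem : ∀ n i, MeasureTheory.MemLp (f n i) 2 (μpos q))
    (hsym : ∀ n i, IsSymmFn q (f n i))
    (M L : ℕ → ℝ) (S : ℕ → ℕ → Set (Fin q → ℝ))
    (hcube : ∀ n i, IsCube q (S n i)) (hsub : ∀ n i, S n i ⊆ posOrthant q)
    (hbd : ∀ n i, ∀ᵐ t ∂(μpos q), ‖f n i t‖ ≤ M i)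
    (hsupp : ∀ n i, ∀ᵐ t ∂(μpos q), t ∉ S n i → f n i t = 0)
    (hvol : ∀ n i, (MeasureTheory.volume (S n i)).toReal ≤ L i)
    (hinner : ∀ i j, Filter.Tendsto (fun n => L2inner q (f n i) (f n j)) Filter.atTop
      (nhds (lam : ℂ)))
    (hstar : ∀ i j, Filter.Tendsto (fun n => L2norm q (fun t =>
        reindex (show q + q + 1 - 2 * ((q + 1) / 2) = q by omega)
          (starC q q ((q + 1) / 2) (f n i) (f n j)) t - f n j t))
      Filter.atTop (nhds 0))
    (k : ℕ) (hk : 1 ≤ k) (idx : ℕ → ℕ) :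
    Filter.Tendsto (fun n => fullContr q
        (((List.range (k - 1)).map fun a => f n (idx (a + 2))).foldl
          (fun F G => reindex (show q + q + 1 - 2 * ((q + 1) / 2) = q by omega)
            (starC q q ((q + 1) / 2) F G))
          (f n (idx 1)))
        (f n (idx (k + 1))))
      Filter.atTop (nhds (lam : ℂ)) := by
  obtain ⟨r, rfl⟩ : ∃ r, q = r + 1 + r := ⟨q / 2, by omega⟩
  have hr : 1 ≤ r := by omega
  have h : (r + 1 + r) + (r + 1 + r) + 1 - 2 * (((r + 1 + r) + 1) / 2) = r + 1 + r := by omega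
  obtain ⟨h1, h2⟩ := main_aux r hr h f hmem
    (fun i => ENNReal.ofReal (M i) ^ 2 * (1 + ENNReal.ofReal (L i)))
    (fun i => by finiteness)
    (fun n i => slice_of_cube r hr (hcube n i) (hbd n i) (hsupp n i) (hvol n i))
    hstar idx (k - 1)
  have hk1 : k - 1 + 1 = k := by omega
  rw [hk1] at h2
  change Tendsto (fun n => fullContr (r + 1 + r)
    (((List.range (k - 1)).map fun a => f n (idx (a + 2))).foldl (star' (r + 1 + r) h)
      (f n (idx 1))) (f n (idx (k + 1)))) atTop (𝓝 (lam : ℂ))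
  generalize hFdef : (fun n => ((List.range (k - 1)).map fun a => f n (idx (a + 2))).foldl
    (star' (r + 1 + r) h) (f n (idx 1))) = F
  have hF : ∀ n, ((List.range (k - 1)).map fun a => f n (idx (a + 2))).foldl
    (star' (r + 1 + r) h) (f n (idx 1)) = F n := fun n => by rw [← hFdef]
  simp only [hF] at h1 h2 ⊢
  simp only [fullContr_eq _ (hsym _ _)]
  have hd : Tendsto (fun n => L2norm (r + 1 + r) (F n - f n (idx k))) atTop (𝓝 0) := by
    rw [← ENNReal.tendsto_toReal_zero_iff (fun n => ((h1 n).sub (hmem n _)).2.ne)] at h2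
    exact h2.congr fun n => (L2norm_eq _ ((h1 n).sub (hmem n _)).1).symm
  have hg : Tendsto (fun n => L2norm (r + 1 + r) (f n (idx (k + 1)))) atTop
      (𝓝 (Real.sqrt lam)) := by
    simp only [L2inner_self]
    have h3 := (Complex.continuous_re.tendsto _).comp (hinner (idx (k + 1)) (idx (k + 1)))
    exact (Real.continuous_sqrt.tendsto _).comp h3
  have hmul := hd.mul hg
  rw [zero_mul] at hmul
  have hdiff : Tendsto (fun n => L2inner (r + 1 + r) (F n - f n (idx k)) (f n (idx (k + 1))))
      atTop (𝓝 0) :=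
    squeeze_zero_norm (fun n => L2inner_le _ ((h1 n).sub (hmem n _)) (hmem n _)) hmul
  have hsum := hdiff.add (hinner (idx k) (idx (k + 1)))
  rw [zero_add] at hsum
  refine hsum.congr fun n => ?_
  unfold L2inner
  rw [← integral_add (L2inner_integrable _ ((h1 n).sub (hmem n _)) (hmem n _))
    (L2inner_integrable _ (hmem n _) (hmem n _))]
  apply integral_congr_ae
  refine Filter.Eventually.of_forall fun t => ?_
  simp only [Pi.sub_apply]
  ring

end
end

section
/- Let q ≥ 2 be an even integer, let λ_i > 0 for i ∈ ℕ, and let {f_n^{(i)} : n, i ∈ ℕ} be a bi-indexed family of symmetric functions in L²(ℝ₊^q) such that: ⟨f_n^{(i)}, f_n^{(j)}⟩ → δ_{ij} λ_i for all i, j; ‖f_n^{(i)} ⌢_{q/2} f_n^{(i)} − f_n^{(i)}‖ → 0 for all i; ‖f_n^{(i)} ⌢_r f_n^{(i)}‖ → 0 for all i and all 1 ≤ r ≤ q−1 with r ≠ q/2; and ‖f_n^{(i)} ⌢_r f_n^{(j)}‖ → 0 for all i ≠ j and all 1 ≤ r ≤ q−1. Then for every s ≥ 1, all indices j₁, …,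 j_s, i ∈ ℕ, and every integer 1 ≤ r ≤ q−1 with r ≠ q/2, ‖(f_n^{(j₁)} ⌢_{q/2} f_n^{(j₂)} ⌢_{q/2} ⋯ ⌢_{q/2} f_n^{(j_s)}) ⌢_r f_n^{(i)}‖ → 0 as n → ∞ (the inner iterated contraction is bracketed from the left). -/
open MeasureTheory Filter Topology

noncomputable section

/-! ### Product-level contraction -/

section ProductLevel

variable {α β γ : Type*} [MeasurableSpace α] [MeasurableSpace β] [MeasurableSpace γ]
  {μ : Measure α} {ν : Measure β} {ρ : Measure γ} [SigmaFinite μ] [SigmaFinite ν] [SigmaFinite ρ]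

set_option linter.unusedSectionVars false

theorem sq_eLpNorm_two {X : Type*} [MeasurableSpace X] (τ : Measure X) (F : X → ℂ) :
    eLpNorm F 2 τ ^ 2 = ∫⁻ x, ‖F x‖ₑ ^ 2 ∂τ := by
  have := eLpNorm_nnreal_pow_eq_lintegral (f := F) (μ := τ) (p := 2) two_ne_zero
  simpa using this

theorem memLp_two_of_lintegral {X : Type*} [MeasurableSpace X] (τ : Measure X) (F : X → ℂ)
    (hF : AEStronglyMeasurable F τ) (h : ∫⁻ x, ‖F x‖ₑ ^ 2 ∂τ < ⊤) : MemLp F 2 τ := by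
  refine ⟨hF, ?_⟩
  rw [← sq_eLpNorm_two] at h
  by_contra hc
  rw [not_lt, top_le_iff] at hc
  rw [hc] at h
  simp at h

theorem slice_right {F : α × β → ℂ} (hF : MemLp F 2 (μ.prod ν)) :
    ∀ᵐ a ∂μ, MemLp (fun b => F (a, b)) 2 ν := by
  have h1 : ∫⁻ a, ∫⁻ b, ‖F (a, b)‖ₑ ^ 2 ∂ν ∂μ < ⊤ := by
    rw [← lintegral_prod (fun z => ‖F z‖ₑ ^ 2) (hF.1.enorm.pow_const 2), ← sq_eLpNorm_two]
    exact ENNReal.pow_lt_top hF.2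
  have h2 := ae_lt_top' (hF.1.enorm.pow_const 2).lintegral_prod_right' h1.ne
  filter_upwards [h2, hF.1.prodMk_left] with a ha hb
  exact memLp_two_of_lintegral _ _ hb ha

theorem slice_left {G : β × γ → ℂ} (hG : MemLp G 2 (ν.prod ρ)) :
    ∀ᵐ c ∂ρ, MemLp (fun b => G (b, c)) 2 ν :=
  slice_right (F := G ∘ Prod.swap)
    (hG.comp_measurePreserving Measure.measurePreserving_swap)

theorem prod_integrable {F : α × β → ℂ} {G : β × γ → ℂ} (hF : MemLp F 2 (μ.prod ν))
    (hG : MemLp G 2 (ν.prod ρ)) :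
    ∀ᵐ z ∂(μ.prod ρ), Integrable (fun b => F (z.1, b) * G (b, z.2)) ν := by
  have h1 := (Measure.quasiMeasurePreserving_fst (μ := μ) (ν := ρ)).ae (slice_right hF)
  have h2 := (Measure.quasiMeasurePreserving_snd (μ := μ) (ν := ρ)).ae (slice_left hG)
  filter_upwards [h1, h2] with z hz1 hz2
  exact hz1.integrable_mul hz2

theorem prod_contr {F : α × β → ℂ} {G : β × γ → ℂ} (hF : MemLp F 2 (μ.prod ν))
    (hG : MemLp G 2 (ν.prod ρ)) :
    MemLp (fun z : α × γ => ∫ b, F (z.1, b) * G (b, z.2) ∂ν) 2 (μ.prod ρ) ∧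
    eLpNorm (fun z : α × γ => ∫ b, F (z.1, b) * G (b, z.2) ∂ν) 2 (μ.prod ρ) ≤
      eLpNorm F 2 (μ.prod ν) * eLpNorm G 2 (ν.prod ρ) := by
  set K : α × γ → ℂ := fun z : α × γ => ∫ b, F (z.1, b) * G (b, z.2) ∂ν with hK
  have hmeas : AEStronglyMeasurable K (μ.prod ρ) := by
    refine AEStronglyMeasurable.integral_prod_right'
      (f := fun w : (α × γ) × β => F (w.1.1, w.2) * G (w.2, w.1.2)) ?_
    have q1 : Measure.QuasiMeasurePreserving (fun w : (α × γ) × β => (w.1.1, w.2))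
        ((μ.prod ρ).prod ν) (μ.prod ν) :=
      QuasiMeasurePreserving.prodMap
        (Measure.quasiMeasurePreserving_fst) (Measure.QuasiMeasurePreserving.id ν)
    have q2 : Measure.QuasiMeasurePreserving (fun w : (α × γ) × β => (w.2, w.1.2))
        ((μ.prod ρ).prod ν) (ν.prod ρ) := by
      have q3 : Measure.QuasiMeasurePreserving (fun w : (α × γ) × β => (w.1.2, w.2))
          ((μ.prod ρ).prod ν) (ρ.prod ν) :=
        QuasiMeasurePreserving.prodMap
          (Measure.quasiMeasurePreserving_snd) (Measure.QuasiMeasurePreserving.id ν)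
      exact (Measure.measurePreserving_swap (μ := ρ) (ν := ν)).quasiMeasurePreserving.comp q3
    exact (hF.1.comp_quasiMeasurePreserving q1).mul (hG.1.comp_quasiMeasurePreserving q2)
  have hpt : ∀ᵐ z ∂(μ.prod ρ), ‖K z‖ₑ ^ 2 ≤
      (∫⁻ b, ‖F (z.1, b)‖ₑ ^ 2 ∂ν) * (∫⁻ b, ‖G (b, z.2)‖ₑ ^ 2 ∂ν) := by
    have h1 := (Measure.quasiMeasurePreserving_fst (μ := μ) (ν := ρ)).ae (slice_right hF)
    have h2 := (Measure.quasiMeasurePreserving_snd (μ := μ) (ν := ρ)).ae (slice_left hG)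
    filter_upwards [h1, h2] with z hz1 hz2
    have h3 : ‖K z‖ₑ ≤ ∫⁻ b, ‖F (z.1, b)‖ₑ * ‖G (b, z.2)‖ₑ ∂ν := by
      refine (enorm_integral_le_lintegral_enorm _).trans (le_of_eq ?_)
      simp
    have h4 := ENNReal.lintegral_mul_le_Lp_mul_Lq ν Real.HolderConjugate.two_two
      hz1.1.enorm hz2.1.enorm
    have h5 := h3.trans h4
    calc ‖K z‖ₑ ^ 2 ≤ _ := pow_le_pow_left₀ (by simp) h5 2
      _ = _ := by
        rw [mul_pow]
        simp only [← ENNReal.rpow_natCast, ← ENNReal.rpow_mul]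
        norm_num
  have hint : ∫⁻ z, ‖K z‖ₑ ^ 2 ∂(μ.prod ρ) ≤
      eLpNorm F 2 (μ.prod ν) ^ 2 * eLpNorm G 2 (ν.prod ρ) ^ 2 := by
    refine (lintegral_mono_ae hpt).trans (le_of_eq ?_)
    rw [lintegral_prod_mul (f := fun a => ∫⁻ b, ‖F (a, b)‖ₑ ^ 2 ∂ν)
      (g := fun c => ∫⁻ b, ‖G (b, c)‖ₑ ^ 2 ∂ν)
      (hF.1.enorm.pow_const 2).lintegral_prod_right'
      (hG.1.enorm.pow_const 2).lintegral_prod_left',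
      sq_eLpNorm_two, sq_eLpNorm_two, lintegral_prod _ (hF.1.enorm.pow_const 2),
      lintegral_prod_symm _ (hG.1.enorm.pow_const 2)]
  refine ⟨memLp_two_of_lintegral _ _ hmeas (hint.trans_lt ?_), ?_⟩
  · exact ENNReal.mul_lt_top (ENNReal.pow_lt_top hF.2) (ENNReal.pow_lt_top hG.2)
  · rw [← sq_eLpNorm_two, ← mul_pow] at hint
    exact (ENNReal.pow_le_pow_left_iff two_ne_zero).1 hint

end ProductLevel

/-! ### Splitting coordinates -/

theorem muPos_eq (n : ℕ) :
    μpos n = Measure.pi (fun _ : Fin n => (volume : Measure ℝ).restrict (Set.Ici 0)) := by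
  have : posOrthant n = Set.univ.pi fun _ => Set.Ici 0 := by
    ext x; simp only [posOrthant, Set.mem_ofPred_eq, Set.mem_univ_pi, Set.mem_Ici]
  rw [μpos, this, volume_pi, Measure.restrict_pi_pi]

instance muPos_sigmaFinite (n : ℕ) : SigmaFinite (μpos n) := by
  rw [μpos]; infer_instance

def joinE {a b c : ℕ} (e : Fin a ⊕ Fin b ≃ Fin c) :
    (Fin a → ℝ) × (Fin b → ℝ) ≃ᵐ (Fin c → ℝ) :=
  (MeasurableEquiv.sumPiEquivProdPi (fun _ : Fin a ⊕ Fin b => ℝ)).symm.trans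
    (MeasurableEquiv.piCongrLeft (fun _ => ℝ) e)

theorem joinE_apply {a b c : ℕ} (e : Fin a ⊕ Fin b ≃ Fin c) (x : Fin a → ℝ) (y : Fin b → ℝ)
    (k : Fin a ⊕ Fin b) : joinE e (x, y) (e k) = Sum.elim x y k := by
  unfold joinE
  rw [MeasurableEquiv.trans_apply, MeasurableEquiv.piCongrLeft_apply_apply e]
  cases k <;> rfl

theorem eq_joinE {a b c : ℕ} (e : Fin a ⊕ Fin b ≃ Fin c) (x : Fin a → ℝ) (y : Fin b → ℝ)
    (z : Fin c → ℝ) (h1 : ∀ i, z (e (Sum.inl i)) = x i) (h2 : ∀ i, z (e (Sum.inr i)) = y i) :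
    z = joinE e (x, y) := by
  funext j
  obtain ⟨k, rfl⟩ := e.surjective j
  rw [joinE_apply]
  cases k with
  | inl i => exact h1 i
  | inr i => exact h2 i

theorem joinE_mp {a b c : ℕ} (e : Fin a ⊕ Fin b ≃ Fin c) :
    MeasurePreserving (joinE e) ((μpos a).prod (μpos b)) (μpos c) := by
  simp only [muPos_eq]
  have h1 := measurePreserving_sumPiEquivProdPi_symm
    (fun _ : Fin a ⊕ Fin b => (volume : Measure ℝ).restrict (Set.Ici 0))
  have h2 := measurePreserving_piCongrLeft
    (fun _ : Fin c => (volume : Measure ℝ).restrict (Set.Ici 0)) e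
  exact h2.comp h1

/-- The common form of `arc` and `contrHalf`. -/
def genC (m n p d : ℕ) (f : (Fin m → ℝ) → ℂ) (g : (Fin n → ℝ) → ℂ) (t : Fin d → ℝ) : ℂ :=
  ∫ s in posOrthant p,
    (f fun j => if (j : ℕ) < m - p then pad t j else pad s (m - 1 - (j : ℕ))) *
    (g fun j => if (j : ℕ) < p then pad s j else pad t (m + (j : ℕ) - 2 * p))

def eOne (m p : ℕ) (h : m - p + p = m) : Fin (m - p) ⊕ Fin p ≃ Fin m :=
  ((Equiv.sumCongr (Equiv.refl _) Fin.revPerm).trans finSumFinEquiv).trans (finCongr h)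

def eTwo (a b c : ℕ) (h : a + b = c) : Fin a ⊕ Fin b ≃ Fin c :=
  finSumFinEquiv.trans (finCongr h)

theorem genC_join (m n p d : ℕ) (f : (Fin m → ℝ) → ℂ) (g : (Fin n → ℝ) → ℂ)
    (hm : m - p + p = m) (hn : p + (n - p) = n) (hd : (m - p) + (n - p) = d)
    (z : (Fin (m - p) → ℝ) × (Fin (n - p) → ℝ)) :
    genC m n p d f g (joinE (eTwo _ _ _ hd) z) =
      ∫ s, f (joinE (eOne m p hm) (z.1, s)) * g (joinE (eTwo _ _ _ hn) (s, z.2)) ∂(μpos p) := by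
  obtain ⟨a, c⟩ := z
  unfold genC μpos
  congr 1
  funext s
  have hpl : ∀ i : Fin (m - p), pad (joinE (eTwo _ _ _ hd) (a, c)) i = a i := by
    intro i
    have hi : (i : ℕ) < d := by omega
    rw [pad, dif_pos hi]
    exact joinE_apply (eTwo _ _ _ hd) a c (Sum.inl i)
  have hpr : ∀ i : Fin (n - p), pad (joinE (eTwo _ _ _ hd) (a, c)) (m - p + i) = c i := by
    intro i
    have hi : m - p + (i : ℕ) < d := by omega
    rw [pad, dif_pos hi]
    exact joinE_apply (eTwo _ _ _ hd) a c (Sum.inr i)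
  have hs : ∀ i : Fin p, pad s i = s i := by
    intro i
    rw [pad, dif_pos i.2]
  congr 2
  · refine eq_joinE _ _ _ _ (fun i => ?_) (fun i => ?_)
    · have : ((eOne m p hm (Sum.inl i) : Fin m) : ℕ) = i := by simp [eOne]
      rw [this, if_pos i.2, hpl]
    · have : ((eOne m p hm (Sum.inr i) : Fin m) : ℕ) = m - p + (p - (i + 1)) := by
        simp [eOne, Fin.val_rev]
      rw [this, if_neg (by omega), show m - 1 - (m - p + (p - ((i : ℕ) + 1))) = i by omega, hs]
  · refine eq_joinE _ _ _ _ (fun i => ?_) (fun i => ?_)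
    · have : ((eTwo _ _ _ hn (Sum.inl i) : Fin n) : ℕ) = i := by simp [eTwo]
      rw [this, if_pos i.2, hs]
    · have : ((eTwo _ _ _ hn (Sum.inr i) : Fin n) : ℕ) = p + i := by simp [eTwo]
      rw [this, if_neg (by omega), show m + (p + (i : ℕ)) - 2 * p = m - p + i by omega, hpr]

theorem L2norm_eq_s15 {n : ℕ} {f : (Fin n → ℝ) → ℂ} (hf : MemLp f 2 (μpos n)) :
    L2norm n f = (eLpNorm f 2 (μpos n)).toReal := by
  rw [hf.eLpNorm_eq_integral_rpow_norm two_ne_zero ENNReal.ofNat_ne_top, ENNReal.toReal_ofReal,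
    L2norm, Real.sqrt_eq_rpow]
  · simp
  · positivity

theorem genC_bound (m n p d : ℕ) (f : (Fin m → ℝ) → ℂ) (g : (Fin n → ℝ) → ℂ)
    (hm : p ≤ m) (hn : p ≤ n) (hd : (m - p) + (n - p) = d)
    (hf : MemLp f 2 (μpos m)) (hg : MemLp g 2 (μpos n)) :
    MemLp (genC m n p d f g) 2 (μpos d) ∧
      L2norm d (genC m n p d f g) ≤ L2norm m f * L2norm n g := by
  have hm' : m - p + p = m := by omega
  have hn' : p + (n - p) = n := by omega
  have m1 := joinE_mp (eOne m p hm')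
  have m2 := joinE_mp (eTwo _ _ _ hn')
  have m3 := joinE_mp (eTwo _ _ _ hd)
  obtain ⟨hA, hB⟩ := prod_contr (hf.comp_measurePreserving m1) (hg.comp_measurePreserving m2)
  rw [eLpNorm_comp_measurePreserving hf.1 m1, eLpNorm_comp_measurePreserving hg.1 m2] at hB
  have heq : (fun z : (Fin (m - p) → ℝ) × (Fin (n - p) → ℝ) =>
      ∫ b, (f ∘ joinE (eOne m p hm')) (z.1, b) * (g ∘ joinE (eTwo _ _ _ hn')) (b, z.2) ∂(μpos p))
      = genC m n p d f g ∘ joinE (eTwo _ _ _ hd) := by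
    funext z
    exact (genC_join m n p d f g hm' hn' hd z).symm
  rw [heq] at hA hB
  have hC : MemLp (genC m n p d f g) 2 (μpos d) := by
    rw [← m3.map_eq]
    exact (MeasurableEquiv.memLp_map_measure_iff _).2 hA
  rw [eLpNorm_comp_measurePreserving hC.1 m3] at hB
  refine ⟨hC, ?_⟩
  rw [L2norm_eq_s15 hC, L2norm_eq_s15 hf, L2norm_eq_s15 hg, ← ENNReal.toReal_mul]
  exact ENNReal.toReal_mono (ENNReal.mul_lt_top hf.2 hg.2).ne hB

theorem genC_sub (m n p d : ℕ) (f f' : (Fin m → ℝ) → ℂ) (g : (Fin n → ℝ) → ℂ)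
    (hm : p ≤ m) (hn : p ≤ n) (hd : (m - p) + (n - p) = d)
    (hf : MemLp f 2 (μpos m)) (hf' : MemLp f' 2 (μpos m)) (hg : MemLp g 2 (μpos n)) :
    genC m n p d (f - f') g =ᵐ[μpos d] genC m n p d f g - genC m n p d f' g := by
  have hm' : m - p + p = m := by omega
  have hn' : p + (n - p) = n := by omega
  have m1 := joinE_mp (eOne m p hm')
  have m2 := joinE_mp (eTwo _ _ _ hn')
  have m3 := joinE_mp (eTwo _ _ _ hd)
  have i1 := prod_integrable (hf.comp_measurePreserving m1) (hg.comp_measurePreserving m2)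
  have i2 := prod_integrable (hf'.comp_measurePreserving m1) (hg.comp_measurePreserving m2)
  rw [← m3.map_eq]
  refine ((joinE (eTwo _ _ _ hd)).measurableEmbedding.ae_map_iff).2 ?_
  filter_upwards [i1, i2] with z h1 h2
  simp only [Function.comp] at h1 h2
  rw [Pi.sub_apply, genC_join m n p d _ g hm' hn' hd, genC_join m n p d _ g hm' hn' hd,
    genC_join m n p d _ g hm' hn' hd, ← integral_sub h1 h2]
  simp [sub_mul]

theorem L2norm_nonneg (n : ℕ) (f : (Fin n → ℝ) → ℂ) : 0 ≤ L2norm n f := Real.sqrt_nonneg _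

theorem L2norm_congr {n : ℕ} {f g : (Fin n → ℝ) → ℂ} (h : f =ᵐ[μpos n] g) :
    L2norm n f = L2norm n g := by
  unfold L2norm
  congr 1
  refine integral_congr_ae ?_
  filter_upwards [h] with x hx
  rw [hx]

theorem L2norm_add_le {n : ℕ} {f g : (Fin n → ℝ) → ℂ} (hf : MemLp f 2 (μpos n))
    (hg : MemLp g 2 (μpos n)) : L2norm n (f + g) ≤ L2norm n f + L2norm n g := by
  rw [L2norm_eq_s15 hf, L2norm_eq_s15 hg, L2norm_eq_s15 (hf.add hg), ← ENNReal.toReal_add hf.2.ne hg.2.ne]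
  exact ENNReal.toReal_mono (ENNReal.add_lt_top.2 ⟨hf.2, hg.2⟩).ne
    (eLpNorm_add_le hf.1 hg.1 (by norm_num))

/-- Perturbation: `‖f ⌢ g‖ ≤ ‖f - f'‖ ‖g‖ + ‖f' ⌢ g‖`. -/
theorem genC_perturb (m n p d : ℕ) (f f' : (Fin m → ℝ) → ℂ) (g : (Fin n → ℝ) → ℂ)
    (u : (Fin d → ℝ) → ℂ)
    (hm : p ≤ m) (hn : p ≤ n) (hd : (m - p) + (n - p) = d)
    (hf : MemLp f 2 (μpos m)) (hf' : MemLp f' 2 (μpos m)) (hg : MemLp g 2 (μpos n))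
    (hu : MemLp u 2 (μpos d)) :
    L2norm d (genC m n p d f g - u) ≤
      L2norm m (f - f') * L2norm n g + L2norm d (genC m n p d f' g - u) := by
  have h1 := genC_bound m n p d (f - f') g hm hn hd (hf.sub hf') hg
  have h2 := genC_bound m n p d f' g hm hn hd hf' hg
  have h3 : genC m n p d f g - u =ᵐ[μpos d]
      genC m n p d (f - f') g + (genC m n p d f' g - u) := by
    filter_upwards [genC_sub m n p d f f' g hm hn hd hf hf' hg] with x hx
    simp only [Pi.add_apply, Pi.sub_apply] at hx ⊢
    rw [hx]; ring
  rw [L2norm_congr h3]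
  exact (L2norm_add_le h1.1 (h2.1.sub hu)).trans (by gcongr; exact h1.2)

/-- `r`-contraction (`r ≠ q/2`) of an iterated `q/2`-contraction with
one more function tends to `0` in norm. -/
theorem iterated_half_contraction_arc_tendsto_zero (q : ℕ) (hq2 : 2 ≤ q) (hqe : q % 2 = 0)
    (lam : ℕ → ℝ) (hlam : ∀ i, 0 < lam i)
    (f : ℕ → ℕ → (Fin q → ℝ) → ℂ)
    (hmem : ∀ n i, MeasureTheory.MemLp (f n i) 2 (μpos q))
    (hsym : ∀ n i, IsSymmFn q (f n i))
    (hinner : ∀ i j, Filter.Tendsto (fun n => L2inner q (f n i) (f n j)) Filter.atTop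
      (nhds (if i = j then (lam i : ℂ) else 0)))
    (hdiag : ∀ i, Filter.Tendsto
      (fun n => L2norm q (fun t => contrHalf q (f n i) (f n i) t - f n i t))
      Filter.atTop (nhds 0))
    (hdiag' : ∀ i r, 1 ≤ r → r ≤ q - 1 → r ≠ q / 2 →
      Filter.Tendsto (fun n => L2norm (q + q - 2 * r) (arc q q r (f n i) (f n i)))
        Filter.atTop (nhds 0))
    (hoff : ∀ i j, i ≠ j → ∀ r, 1 ≤ r → r ≤ q - 1 →
      Filter.Tendsto (fun n => L2norm (q + q - 2 * r) (arc q q r (f n i) (f n j)))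
        Filter.atTop (nhds 0))
    (s : ℕ) (hs : 1 ≤ s) (jdx : ℕ → ℕ) (i : ℕ)
    (r : ℕ) (hr1 : 1 ≤ r) (hrq : r ≤ q - 1) (hrh : r ≠ q / 2) :
    Filter.Tendsto (fun n => L2norm (q + q - 2 * r) (arc q q r
        (((List.range (s - 1)).map fun a => f n (jdx (a + 2))).foldl
          (contrHalf q) (f n (jdx 1)))
        (f n i)))
      Filter.atTop (nhds 0) := by
  classical
  have hh : q - q / 2 + (q - q / 2) = q := by omega
  have hhq : q / 2 ≤ q := by omega
  have harc : ∀ (r : ℕ) (u v : (Fin q → ℝ) → ℂ),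
      arc q q r u v = genC q q r (q + q - 2 * r) u v := fun _ _ _ => rfl
  have hcH : ∀ (u v : (Fin q → ℝ) → ℂ), contrHalf q u v = genC q q (q / 2) q u v :=
    fun _ _ => rfl
  -- boundedness of the norms
  have hnorm : ∀ j, Tendsto (fun n => L2norm q (f n j)) atTop (nhds (Real.sqrt (lam j))) := by
    intro j
    have h1 := hinner j j
    rw [if_pos rfl] at h1
    have h2 := (Complex.continuous_re.tendsto _).comp h1
    have h3 := (Real.continuous_sqrt.tendsto _).comp h2
    refine h3.congr fun n => ?_
    simp only [Function.comp, L2inner, L2norm]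
    congr 1
    have : ∀ x, f n j x * (starRingEnd ℂ) (f n j x) = ((‖f n j x‖ ^ 2 : ℝ) : ℂ) := by
      intro x
      rw [Complex.mul_conj, Complex.normSq_eq_norm_sq]
    simp only [this]
    rw [integral_complex_ofReal]
    simp
  -- off-diagonal half contraction
  have hoffH : ∀ a b, a ≠ b →
      Tendsto (fun n => L2norm q (genC q q (q / 2) q (f n a) (f n b))) atTop (nhds 0) := by
    intro a b hab
    have h1 := hoff a b hab (q / 2) (by omega) (by omega)
    have key : ∀ d, d = q → ∀ u v : (Fin q → ℝ) → ℂ,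
        L2norm d (genC q q (q / 2) d u v) = L2norm q (genC q q (q / 2) q u v) := by
      intro d hd u v
      subst hd
      rfl
    refine h1.congr fun n => ?_
    rw [harc]
    exact key _ (by omega) _ _
  -- the iterated contraction
  set G : ℕ → ℕ → (Fin q → ℝ) → ℂ := fun k n =>
    ((List.range k).map fun a => f n (jdx (a + 2))).foldl (contrHalf q) (f n (jdx 1)) with hG
  have hG0 : ∀ n, G 0 n = f n (jdx 1) := fun n => by simp [hG]
  have hGs : ∀ k n, G (k + 1) n = genC q q (q / 2) q (G k n) (f n (jdx (k + 2))) := by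
    intro k n
    simp only [hG, List.range_succ, List.map_append, List.foldl_append]
    rfl
  have hGm : ∀ k n, MemLp (G k n) 2 (μpos q) := by
    intro k n
    induction k with
    | zero => rw [hG0]; exact hmem _ _
    | succ k ih =>
      rw [hGs]
      exact (genC_bound q q (q / 2) q _ _ hhq hhq hh ih (hmem _ _)).1
  have hzero : ∀ {n : ℕ}, MemLp (0 : (Fin n → ℝ) → ℂ) 2 (μpos n) := MemLp.zero
  have hgz : ∀ (p d : ℕ) (v : (Fin q → ℝ) → ℂ), genC q q p d 0 v = 0 := by
    intro p d v
    funext t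
    simp [genC]
  have hLz : ∀ d, L2norm d 0 = 0 := by
    intro d
    simp [L2norm]
  have hsq : ∀ (a b c : ℕ → ℝ) (L : ℝ), (∀ n, 0 ≤ c n) → (∀ n, c n ≤ a n * b n + 0) →
      Tendsto a atTop (nhds 0) → Tendsto b atTop (nhds L) → Tendsto c atTop (nhds 0) := by
    intro a b c L hc hab ha hb
    refine squeeze_zero hc hab ?_
    simpa using ha.mul hb
  have hsq' : ∀ (a b c e : ℕ → ℝ) (L : ℝ), (∀ n, 0 ≤ c n) → (∀ n, c n ≤ a n * b n + e n) →
      Tendsto a atTop (nhds 0) → Tendsto b atTop (nhds L) → Tendsto e atTop (nhds 0) →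
      Tendsto c atTop (nhds 0) := by
    intro a b c e L hc hab ha hb he
    refine squeeze_zero hc hab ?_
    simpa using (ha.mul hb).add he
  -- dichotomy
  have hdich : ∀ k, Tendsto (fun n => L2norm q (G k n - f n (jdx 1))) atTop (nhds 0) ∨
      Tendsto (fun n => L2norm q (G k n - 0)) atTop (nhds 0) := by
    intro k
    induction k with
    | zero =>
      left
      simp [hG0, hLz]
    | succ k ih =>
      rcases ih with ih | ih
      · by_cases hj : jdx 1 = jdx (k + 2)
        · left
          refine hsq' _ _ _ _ _ (fun n => L2norm_nonneg _ _) (fun n => ?_) ih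
            (hnorm (jdx (k + 2))) (hdiag (jdx 1))
          rw [hGs]
          refine (genC_perturb q q (q / 2) q (G k n) (f n (jdx 1)) (f n (jdx (k + 2)))
            (f n (jdx 1)) hhq hhq hh (hGm k n) (hmem _ _) (hmem _ _) (hmem _ _)).trans
            (le_of_eq ?_)
          rw [← hj]
          rfl
        · right
          refine hsq' _ _ _ _ _ (fun n => L2norm_nonneg _ _) (fun n => ?_) ih
            (hnorm (jdx (k + 2))) (hoffH _ _ hj)
          rw [hGs]
          refine (genC_perturb q q (q / 2) q (G k n) (f n (jdx 1)) (f n (jdx (k + 2)))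
            0 hhq hhq hh (hGm k n) (hmem _ _) (hmem _ _) hzero).trans (le_of_eq ?_)
          rw [sub_zero]
      · right
        refine hsq _ _ _ _ (fun n => L2norm_nonneg _ _) (fun n => ?_) ih (hnorm (jdx (k + 2)))
        rw [hGs]
        refine (genC_perturb q q (q / 2) q (G k n) 0 (f n (jdx (k + 2)))
            0 hhq hhq hh (hGm k n) hzero (hmem _ _) hzero).trans (le_of_eq ?_)
        rw [hgz, sub_zero (0 : (Fin q → ℝ) → ℂ), hLz]
  have hd : q - r + (q - r) = q + q - 2 * r := by omega
  have hr' : r ≤ q := by omega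
  have hbase : Tendsto (fun n => L2norm (q + q - 2 * r) (arc q q r (f n (jdx 1)) (f n i)))
      atTop (nhds 0) := by
    by_cases hj : jdx 1 = i
    · rw [hj]
      exact hdiag' i r hr1 hrq hrh
    · exact hoff _ _ hj r hr1 hrq
  change Tendsto (fun n => L2norm (q + q - 2 * r) (arc q q r (G (s - 1) n) (f n i)))
    atTop (nhds 0)
  rcases hdich (s - 1) with h | h
  · refine hsq' _ _ _ _ _ (fun n => L2norm_nonneg _ _) (fun n => ?_) h (hnorm i) hbase
    have := genC_perturb q q r (q + q - 2 * r) (G (s - 1) n) (f n (jdx 1)) (f n i)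
            0 hr' hr' hd (hGm _ n) (hmem _ _) (hmem _ _) hzero
    rw [sub_zero, sub_zero] at this
    exact this
  · refine hsq _ _ _ _ (fun n => L2norm_nonneg _ _) (fun n => ?_) h (hnorm i)
    have := genC_perturb q q r (q + q - 2 * r) (G (s - 1) n) 0 (f n i)
            0 hr' hr' hd (hGm _ n) hzero (hmem _ _) hzero
    rw [hgz, sub_zero, sub_zero (0 : (Fin (q + q - 2 * r) → ℝ) → ℂ), hLz] at this
    exact this

end
end
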